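/- Consider the detection problem: under 𝒬, Ỹ ∈ ℝ^{N×n} has i.i.d. N(0, 1/N) entries; under 𝒫, draw v ∼ BR(N,ρ) and a uniformly random orthogonal Q ∈ ℝ^{n×n}, let Y have first column v and remaining columns i.i.d. N(0, (1/N) I_N), and observe Ỹ = YQ. Define the degree-D advantage Adv_{≤D} := sup over nonzero real polynomials f of degree at most D in the Nn entries of Ỹ of 𝔼_𝒫[f(Ỹ)] / √(𝔼_𝒬[f(Ỹ)²]). For any constant C₁ > 0 there exists a constant C₂ = C₂(C₁) > 0 such that: if nρ ≥ √N·(log N)^{C₂} and D ≤ (log N)^{C₁}, then Adv_{≤D} ≤ 2. -/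

import Mathlib

open MeasureTheory ProbabilityTheory Matrix

/-- Euclidean norm of a vector in `ℝ^k`. -/
noncomputable def eucNorm {k : ℕ} (v : Fin k → ℝ) : ℝ := Real.sqrt (∑ i, (v i) ^ 2)

/-- ℓ_p norm of a vector in `ℝ^k`. -/
noncomputable def lpNorm {k : ℕ} (p : ℝ) (v : Fin k → ℝ) : ℝ := (∑ i, |v i| ^ p) ^ (1 / p)

/-- Supremum (ℓ_∞) norm of a vector in `ℝ^k`. -/
noncomputable def supNorm {k : ℕ} (v : Fin k → ℝ) : ℝ := ⨆ i, |v i|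

/-- The Gaussian measure `N(0, σ2 · I_k)` on `ℝ^k`. -/
noncomputable def gaussVec (k : ℕ) (σ2 : NNReal) : Measure (Fin k → ℝ) :=
  Measure.pi fun _ => gaussianReal 0 σ2

instance (k : ℕ) (σ2 : NNReal) : IsProbabilityMeasure (gaussVec k σ2) := by
  unfold gaussVec; infer_instance

/-- The law of `N` i.i.d. samples from `N(0, σ2 · I_k)`. -/
noncomputable def iidGaussVec (N k : ℕ) (σ2 : NNReal) : Measure (Fin N → Fin k → ℝ) :=
  Measure.pi fun _ => gaussVec k σ2

/-- Concatenation `(a, bᵀ)ᵀ ∈ ℝ^n` of a scalar `a` with a vector `b ∈ ℝ^{n-1}`. -/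
noncomputable def rowCat {n : ℕ} (a : ℝ) (b : Fin (n - 1) → ℝ) : Fin n → ℝ :=
  fun j => if h : (j : ℕ) = 0 then a else b ⟨(j : ℕ) - 1, by have := j.isLt; omega⟩

/-- The `N × n` matrix whose rows are `y_iᵀ = (v_i, b_iᵀ)`, i.e. whose first column is `v`
and whose remaining `n - 1` columns are given by `B`. -/
noncomputable def gaussBasis {N n : ℕ} (v : Fin N → ℝ) (B : Fin N → Fin (n - 1) → ℝ) :
    Matrix (Fin N) (Fin n) ℝ :=
  Matrix.of fun i => rowCat (v i) (B i)

/-- The matrix `M(Y) = ∑_i (‖y_i‖² - (n-1)/N) y_i y_iᵀ - (3/N) I_n` built from the rows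
`y_iᵀ` of `Y`. -/
noncomputable def specMat {N n : ℕ} (Y : Matrix (Fin N) (Fin n) ℝ) :
    Matrix (Fin n) (Fin n) ℝ :=
  (∑ i, ((∑ j, (Y i j) ^ 2) - ((n : ℝ) - 1) / N) • Matrix.vecMulVec (Y i) (Y i))
    - ((3 : ℝ) / N) • (1 : Matrix (Fin n) (Fin n) ℝ)

/-- `u` is a unit leading eigenvector of the (symmetric) matrix `M`: a unit eigenvector
whose eigenvalue has the largest absolute value among all eigenvalues of `M`. -/
def IsLeadingEigen {n : ℕ} (M : Matrix (Fin n) (Fin n) ℝ) (u : Fin n → ℝ) : Prop :=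
  eucNorm u = 1 ∧ ∃ μ : ℝ, M.mulVec u = μ • u ∧
    ∀ μ' : ℝ, (∃ w : Fin n → ℝ, w ≠ 0 ∧ M.mulVec w = μ' • w) → |μ'| ≤ |μ|

/-- The quantity `η = η(N, n, v, δ)` with universal constant `C`. -/
noncomputable def etaBound (C : ℝ) (N n : ℕ) (v : Fin N → ℝ) (δ : ℝ) : ℝ :=
  C * ((eucNorm v + 1) * n * Real.sqrt (Real.log (N / δ)) / (N : ℝ) ^ ((3 : ℝ) / 2)
    + lpNorm 4 v ^ 2 * Real.sqrt (n * Real.log (N / δ)) / N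
    + lpNorm 6 v ^ 3 * (Real.sqrt n + Real.sqrt (Real.log (N / δ))) / Real.sqrt N
    + supNorm v ^ 2 * (n * Real.log (N / δ) + (Real.log (N / δ)) ^ 2) / N
    + (n * Real.log (N / δ)) ^ ((3 : ℝ) / 2) / (N : ℝ) ^ 2
    + |eucNorm v ^ 2 - 1| / N)

/-- The Bernoulli–Rademacher distribution on `ℝ`: `0` w.p. `1-ρ`, `±1/√(Nρ)` w.p. `ρ/2` each. -/
noncomputable def brMeasure (N : ℕ) (ρ : ℝ) : Measure ℝ :=
  (Real.toNNReal (1 - ρ)) • Measure.dirac 0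
    + (Real.toNNReal (ρ / 2)) • Measure.dirac (Real.sqrt (N * ρ))⁻¹
    + (Real.toNNReal (ρ / 2)) • Measure.dirac (-(Real.sqrt (N * ρ))⁻¹)

instance (N : ℕ) (ρ : ℝ) : IsFiniteMeasure (brMeasure N ρ) := by
  unfold brMeasure; infer_instance

/-- The law of a Bernoulli–Rademacher vector `v ∼ BR(N, ρ)` with i.i.d. entries. -/
noncomputable def brVec (N : ℕ) (ρ : ℝ) : Measure (Fin N → ℝ) :=
  Measure.pi fun _ => brMeasure N ρ

instance (N : ℕ) (ρ : ℝ) : IsFiniteMeasure (brVec N ρ) := by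
  unfold brVec; infer_instance

/-!
Given `Q`, the signal enters a polynomial `f` of degree at most `D` only through its moments of
order at most `D`, so replacing the law `ν` of its entries by its degree-`D` Hermite expansion
relative to `N(0, s)` gives `𝔼_𝒫[f] = 𝔼_𝒬[f · L]`, where `L` averages over `Q` the low-degree
likelihood ratio of `Y u`, `u` being the first row of `Q`. By Cauchy–Schwarz the advantage is at
most `‖L‖`, and Hermite orthogonality gives `‖L‖² = ∑_{|α| ≤ D} ∏ᵢ w(αᵢ) 𝔼⟨u, u'⟩^{|α|}` for two
independent copies `u, u'`. Invariance of `Q` allows `u` to be replaced by a random sign vector of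
unit length, so that `𝔼⟨u, u'⟩^d ≤ 4 d! / n^{d/2}`, and the sum factorizes over the rows. The
Bernoulli–Rademacher law shares its first three moments with `N(0, 1/N)`, so the weights start at
`k = 4`, where `w(k) ≤ 4 k! ρ^{2-k}`; each factor is thus `1 + O(1/N)` with a small constant.
-/

open Polynomial (C X derivative)
open scoped NNReal Polynomial

/-- The random variable `X` has finite moments of every order, i.e. it lies in `L^p` for every
finite `p`. Such random variables form an algebra, which settles every integrability question about
polynomials below. -/
def HasAllMoments {Ω : Type*} [MeasurableSpace Ω] (X : Ω → ℝ) (μ : Measure Ω) : Prop :=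
  ∀ p : ℝ≥0, MemLp X p μ

namespace HasAllMoments

variable {Ω Ω' : Type*} [MeasurableSpace Ω] [MeasurableSpace Ω'] {μ : Measure Ω} {μ' : Measure Ω'}
  {X Y : Ω → ℝ}

lemma memLp_two (hX : HasAllMoments X μ) : MemLp X 2 μ := by exact_mod_cast hX 2

lemma integrable (hX : HasAllMoments X μ) : Integrable X μ :=
  memLp_one_iff_integrable.1 (by exact_mod_cast hX 1)

lemma of_ae_bound [IsFiniteMeasure μ] (hX : AEStronglyMeasurable X μ) (c : ℝ)
    (hc : ∀ᵐ ω ∂μ, |X ω| ≤ c) : HasAllMoments X μ :=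
  fun _ => MemLp.of_bound hX c hc

lemma const [IsFiniteMeasure μ] (c : ℝ) : HasAllMoments (fun _ => c) μ :=
  fun _ => memLp_const c

lemma add (hX : HasAllMoments X μ) (hY : HasAllMoments Y μ) :
    HasAllMoments (fun ω => X ω + Y ω) μ :=
  fun p => (hX p).add (hY p)

lemma mul (hX : HasAllMoments X μ) (hY : HasAllMoments Y μ) :
    HasAllMoments (fun ω => X ω * Y ω) μ := by
  intro p
  have holder : ENNReal.HolderTriple ((2 * p : ℝ≥0) : ENNReal) (2 * p : ℝ≥0) p := by
    constructor
    rw [ENNReal.coe_mul, ENNReal.coe_ofNat, ENNReal.mul_inv (by simp) (by simp), ← add_mul,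
      ENNReal.inv_two_add_inv_two, one_mul]
  exact MemLp.mul' (r := (p : ENNReal)) (hY (2 * p)) (hX (2 * p))

lemma const_mul (hX : HasAllMoments X μ) (c : ℝ) : HasAllMoments (fun ω => c * X ω) μ :=
  fun p => (hX p).const_mul c

lemma sum {ι : Type*} (t : Finset ι) {X : ι → Ω → ℝ} (hX : ∀ i, HasAllMoments (X i) μ) :
    HasAllMoments (fun ω => ∑ i ∈ t, X i ω) μ :=
  fun p => memLp_finsetSum t fun i _ => hX i p

lemma prod [IsFiniteMeasure μ] {ι : Type*} (t : Finset ι) {X : ι → Ω → ℝ}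
    (hX : ∀ i, HasAllMoments (X i) μ) : HasAllMoments (fun ω => ∏ i ∈ t, X i ω) μ := by
  classical
  induction t using Finset.induction_on with
  | empty => simpa only [Finset.prod_empty] using const 1
  | insert i t hi ih => simpa only [Finset.prod_insert hi] using (hX i).mul ih

lemma comp_measurePreserving {f : Ω' → Ω} (hX : HasAllMoments X μ)
    (hf : MeasurePreserving f μ' μ) : HasAllMoments (fun ω => X (f ω)) μ' :=
  fun p => (hX p).comp_measurePreserving hf

lemma polynomial_eval [IsFiniteMeasure μ] (hX : HasAllMoments X μ) (p : ℝ[X]) :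
    HasAllMoments (fun ω => p.eval (X ω)) μ := by
  induction p using Polynomial.induction_on with
  | C a => simpa only [Polynomial.eval_C] using const a
  | add p q hp hq => simpa only [Polynomial.eval_add] using hp.add hq
  | monomial k a ih =>
    simpa only [pow_succ, ← mul_assoc, Polynomial.eval_mul_X] using ih.mul hX

lemma mvPolynomial_eval [IsFiniteMeasure μ] {σ : Type*} {X : σ → Ω → ℝ}
    (hX : ∀ i, HasAllMoments (X i) μ) (p : MvPolynomial σ ℝ) :
    HasAllMoments (fun ω => MvPolynomial.eval (fun i => X i ω) p) μ := by
  induction p using MvPolynomial.induction_on with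
  | C a => simpa only [MvPolynomial.eval_C] using const a
  | add p q hp hq => simpa only [map_add] using hp.add hq
  | mul_X p i hp => simpa only [map_mul, MvPolynomial.eval_X] using hp.mul (hX i)

end HasAllMoments

lemma hasAllMoments_gaussianReal (s : ℝ≥0) : HasAllMoments (fun x => x) (gaussianReal 0 s) :=
  fun p => memLp_id_gaussianReal p

lemma HasAllMoments.coord_pi {ι : Type*} [Fintype ι] {ν : Measure ℝ} [IsProbabilityMeasure ν]
    (hν : HasAllMoments (fun x => x) ν) (i : ι) :
    HasAllMoments (fun y => y i) (Measure.pi fun _ : ι => ν) :=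
  hν.comp_measurePreserving (measurePreserving_eval (fun _ => ν) i)

lemma integral_id_mul_polynomial_gaussianReal (s : ℝ≥0) (p : ℝ[X]) :
    ∫ x, x * p.eval x ∂(gaussianReal 0 s) = s * ∫ x, (derivative p).eval x ∂(gaussianReal 0 s) := by
  rcases eq_or_ne s 0 with rfl | hs
  · simp
  have hs' : (s : ℝ) ≠ 0 := by exact_mod_cast hs
  have integrable_mul_pdf (q : ℝ[X]) : Integrable (fun x => q.eval x * gaussianPDFReal 0 s x) := by
    have hq := ((hasAllMoments_gaussianReal s).polynomial_eval q).integrable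
    rw [gaussianReal_of_var_ne_zero _ hs, integrable_withDensity_iff_integrable_smul₀'
      (by fun_prop) (by simp [gaussianPDF])] at hq
    refine hq.congr (.of_forall fun x => ?_)
    simp [gaussianPDF, ENNReal.toReal_ofReal (gaussianPDFReal_nonneg 0 s x), mul_comm]
  have hasDerivAt_pdf (x : ℝ) :
      HasDerivAt (gaussianPDFReal 0 s) (-(x / s) * gaussianPDFReal 0 s x) x := by
    have exponent : HasDerivAt (fun x : ℝ => -(x - 0) ^ 2 / (2 * s)) (-(x / s)) x := by
      convert! (((hasDerivAt_id x).sub_const 0).pow 2).neg.div_const (2 * (s : ℝ)) using 1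
      simp; field_simp
    unfold gaussianPDFReal
    convert! (exponent.exp.const_mul (√(2 * Real.pi * s))⁻¹) using 1
    ring
  have by_parts := integral_mul_deriv_eq_deriv_mul_of_integrable
    (fun x _ => p.hasDerivAt x) (fun x _ => hasDerivAt_pdf x)
    ((integrable_mul_pdf (C (-(1 / (s : ℝ))) * X * p)).congr (.of_forall fun x => by simp; ring))
    (integrable_mul_pdf (derivative p)) (integrable_mul_pdf p)
  rw [integral_gaussianReal_eq_integral_smul hs, integral_gaussianReal_eq_integral_smul hs]
  calc ∫ x, gaussianPDFReal 0 s x • (x * p.eval x)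
      = -s * ∫ x, p.eval x * (-(x / s) * gaussianPDFReal 0 s x) := by
        rw [← integral_const_mul]
        congr with x
        rw [smul_eq_mul]; field_simp
    _ = s * ∫ x, gaussianPDFReal 0 s x • (derivative p).eval x := by
        simp only [by_parts, smul_eq_mul, mul_comm (gaussianPDFReal 0 s _)]; ring

/-- The Hermite polynomial of degree `k` with leading coefficient `1` that is orthogonal for the
centred Gaussian of variance `s`. -/
noncomputable def hermiteVar (s : ℝ) : ℕ → ℝ[X]
  | 0 => 1
  | k + 1 => X * hermiteVar s k - C s * derivative (hermiteVar s k)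

lemma derivative_hermiteVar_succ (s : ℝ) (k : ℕ) :
    derivative (hermiteVar s (k + 1)) = C (k + 1 : ℝ) * hermiteVar s k := by
  induction k with
  | zero => simp [hermiteVar]
  | succ k ih =>
    calc derivative (hermiteVar s (k + 2))
        = hermiteVar s (k + 1) + X * derivative (hermiteVar s (k + 1))
          - C s * derivative (derivative (hermiteVar s (k + 1))) := by
          simp [hermiteVar]
      _ = hermiteVar s (k + 1)
          + C (k + 1 : ℝ) * (X * hermiteVar s k - C s * derivative (hermiteVar s k)) := by
          rw [ih, Polynomial.derivative_C_mul]; ring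
      _ = C ((k + 1 : ℕ) + 1 : ℝ) * hermiteVar s (k + 1) := by
          simp only [hermiteVar, Nat.cast_add, Nat.cast_one, map_add, map_one]; ring

lemma hermiteVar_add_two (s : ℝ) (k : ℕ) :
    hermiteVar s (k + 2)
      = X * hermiteVar s (k + 1) - C (s * (k + 1)) * hermiteVar s k := by
  rw [hermiteVar, derivative_hermiteVar_succ, ← mul_assoc, ← Polynomial.C_mul]

lemma iterate_derivative_hermiteVar_self (s : ℝ) (k : ℕ) :
    derivative^[k] (hermiteVar s k) = C (k.factorial : ℝ) := by
  induction k with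
  | zero => simp [hermiteVar]
  | succ k ih =>
    rw [Function.iterate_succ_apply, derivative_hermiteVar_succ,
      Polynomial.iterate_derivative_C_mul, ih, ← Polynomial.C_mul, Nat.factorial_succ]
    push_cast
    rfl

lemma natDegree_hermiteVar_le (s : ℝ) (k : ℕ) : (hermiteVar s k).natDegree ≤ k := by
  induction k with
  | zero => simp [hermiteVar]
  | succ k ih =>
    refine (Polynomial.natDegree_sub_le _ _).trans (max_le ?_ ?_)
    · exact Polynomial.natDegree_mul_le.trans (by rw [Polynomial.natDegree_X]; omega)
    · exact (Polynomial.natDegree_C_mul_le _ _).trans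
        ((Polynomial.natDegree_derivative_le _).trans (by omega))

lemma abs_eval_hermiteVar_le {s x y : ℝ} (hs : 0 ≤ s) (hsx : s ≤ x ^ 2) (hy : |y| ≤ x) (k : ℕ) :
    |(hermiteVar s k).eval y| ≤ k.factorial * x ^ k := by
  have hx : 0 ≤ x := (abs_nonneg y).trans hy
  induction k using Nat.twoStepInduction with
  | zero => simp [hermiteVar]
  | one => simpa [hermiteVar] using hy
  | more k ih_k ih_succ =>
    rw [hermiteVar_add_two]
    simp only [Polynomial.eval_sub, Polynomial.eval_mul, Polynomial.eval_X, Polynomial.eval_C]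
    calc |y * (hermiteVar s (k + 1)).eval y - s * (k + 1) * (hermiteVar s k).eval y|
        ≤ |y| * |(hermiteVar s (k + 1)).eval y| + s * (k + 1) * |(hermiteVar s k).eval y| := by
          refine (abs_sub _ _).trans_eq ?_
          rw [abs_mul, abs_mul, abs_of_nonneg (by positivity : 0 ≤ s * (k + 1))]
      _ ≤ x * ((k + 1).factorial * x ^ (k + 1)) + x ^ 2 * (k + 1) * (k.factorial * x ^ k) := by
          gcongr
      _ = 2 * (k + 1).factorial * x ^ (k + 2) := by
          rw [Nat.factorial_succ]; push_cast; ring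
      _ ≤ (k + 2) * (k + 1).factorial * x ^ (k + 2) := by
          gcongr; linarith [(Nat.cast_nonneg k : (0 : ℝ) ≤ k)]
      _ = (k + 2).factorial * x ^ (k + 2) := by
          rw [Nat.factorial_succ (k + 1)]; push_cast; ring

section GaussianVector

variable {ι : Type*} [Fintype ι]

lemma hasAllMoments_coord_gaussian (s : ℝ≥0) (i : ι) :
    HasAllMoments (fun y : ι → ℝ => y i) (Measure.pi fun _ => gaussianReal 0 s) :=
  (hasAllMoments_gaussianReal s).coord_pi i

lemma integrable_mvPolynomial_gaussian (s : ℝ≥0) (F : MvPolynomial ι ℝ) :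
    Integrable (fun y => MvPolynomial.eval y F) (Measure.pi fun _ : ι => gaussianReal 0 s) :=
  (HasAllMoments.mvPolynomial_eval (hasAllMoments_coord_gaussian s) F).integrable

lemma integral_monomial_pi (ν : Measure ℝ) [SigmaFinite ν] (m : ι →₀ ℕ) (a : ℝ) :
    ∫ y, MvPolynomial.eval y (MvPolynomial.monomial m a) ∂(Measure.pi fun _ : ι => ν)
      = a * ∏ i, ∫ x, x ^ m i ∂ν := by
  simp_rw [MvPolynomial.eval_monomial, integral_const_mul, Finsupp.prod_pow]
  rw [integral_fintype_prod_eq_prod (f := fun i (x : ℝ) => x ^ m i)]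

lemma integral_X_mul_gaussian (s : ℝ≥0) (j : ι) (F : MvPolynomial ι ℝ) :
    ∫ y, y j * MvPolynomial.eval y F ∂(Measure.pi fun _ => gaussianReal 0 s)
      = s * ∫ y, MvPolynomial.eval y (MvPolynomial.pderiv j F)
          ∂(Measure.pi fun _ => gaussianReal 0 s) := by
  classical
  have eval_X_mul (F : MvPolynomial ι ℝ) (y : ι → ℝ) :
      y j * MvPolynomial.eval y F = MvPolynomial.eval y (MvPolynomial.X j * F) := by simp
  simp only [eval_X_mul]
  induction F using MvPolynomial.induction_on' with
  | add p q hp hq =>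
    simp only [mul_add, map_add]
    rw [integral_add (integrable_mvPolynomial_gaussian s _) (integrable_mvPolynomial_gaussian s _),
      integral_add (integrable_mvPolynomial_gaussian s _) (integrable_mvPolynomial_gaussian s _),
      hp, hq, mul_add]
  | monomial m a =>
    have moment_succ : ∫ x, x ^ (m j + 1) ∂(gaussianReal 0 s)
        = s * (m j * ∫ x, x ^ (m j - 1) ∂(gaussianReal 0 s)) := by
      simpa [pow_succ', Polynomial.derivative_X_pow, integral_const_mul] using
        integral_id_mul_polynomial_gaussianReal s (X ^ m j)
    have other_factors (i : ι) (hi : i ∈ Finset.univ.erase j) :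
        (Finsupp.single j 1 + m : ι →₀ ℕ) i = (m - Finsupp.single j 1 : ι →₀ ℕ) i := by
      simp [(Finset.ne_of_mem_erase hi).symm]
    rw [MvPolynomial.pderiv_monomial, MvPolynomial.X, MvPolynomial.monomial_mul,
      integral_monomial_pi, integral_monomial_pi,
      ← Finset.mul_prod_erase _ _ (Finset.mem_univ j),
      ← Finset.mul_prod_erase _ _ (Finset.mem_univ j),
      Finset.prod_congr rfl fun i hi => by rw [other_factors i hi]]
    simp only [Finsupp.add_apply, Finsupp.tsub_apply, Finsupp.single_eq_same, add_comm 1 (m j),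
      moment_succ]
    ring

/-- The linear form `y ↦ u ⬝ᵥ y` as a polynomial. -/
noncomputable def linForm (u : ι → ℝ) : MvPolynomial ι ℝ :=
  ∑ j, u j • MvPolynomial.X j

lemma eval_aeval_linForm (u y : ι → ℝ) (p : ℝ[X]) :
    MvPolynomial.eval y (Polynomial.aeval (linForm u) p) = p.eval (u ⬝ᵥ y) := by
  have eval_linForm : MvPolynomial.eval y (linForm u) = u ⬝ᵥ y := by
    simp [linForm, dotProduct, MvPolynomial.smul_eval]
  induction p using Polynomial.induction_on' <;> simp_all

lemma pderiv_linForm (u : ι → ℝ) (j : ι) :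
    MvPolynomial.pderiv j (linForm u) = MvPolynomial.C (u j) := by
  classical
  simp [linForm, MvPolynomial.pderiv_X, Pi.single_apply, MvPolynomial.smul_eq_C_mul]

lemma integrable_eval_dotProduct_mul_gaussian (s : ℝ≥0) (u w : ι → ℝ) (p q : ℝ[X]) :
    Integrable (fun y => p.eval (u ⬝ᵥ y) * q.eval (w ⬝ᵥ y))
      (Measure.pi fun _ => gaussianReal 0 s) := by
  simpa only [map_mul, eval_aeval_linForm] using integrable_mvPolynomial_gaussian s
    (Polynomial.aeval (linForm u) p * Polynomial.aeval (linForm w) q)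

lemma integral_dotProduct_mul_gaussian (s : ℝ≥0) (u w : ι → ℝ) (p q : ℝ[X]) :
    ∫ y, (u ⬝ᵥ y) * (p.eval (u ⬝ᵥ y) * q.eval (w ⬝ᵥ y)) ∂(Measure.pi fun _ => gaussianReal 0 s)
      = s * ((u ⬝ᵥ u) * ∫ y, (derivative p).eval (u ⬝ᵥ y) * q.eval (w ⬝ᵥ y)
            ∂(Measure.pi fun _ => gaussianReal 0 s)
          + (u ⬝ᵥ w) * ∫ y, p.eval (u ⬝ᵥ y) * (derivative q).eval (w ⬝ᵥ y)
            ∂(Measure.pi fun _ => gaussianReal 0 s)) := by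
  set G : MvPolynomial ι ℝ := Polynomial.aeval (linForm u) p * Polynomial.aeval (linForm w) q
    with hG
  have eval_G (y : ι → ℝ) : p.eval (u ⬝ᵥ y) * q.eval (w ⬝ᵥ y) = MvPolynomial.eval y G := by
    rw [hG, map_mul, eval_aeval_linForm, eval_aeval_linForm]
  have eval_pderiv_G (j : ι) (y : ι → ℝ) : MvPolynomial.eval y (MvPolynomial.pderiv j G)
      = u j * ((derivative p).eval (u ⬝ᵥ y) * q.eval (w ⬝ᵥ y))
        + w j * (p.eval (u ⬝ᵥ y) * (derivative q).eval (w ⬝ᵥ y)) := by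
    simp only [hG, MvPolynomial.pderiv_mul, Derivation.map_aeval, pderiv_linForm, map_add, map_mul,
      smul_eq_mul, eval_aeval_linForm, MvPolynomial.eval_C]
    ring
  have integrable_coord_mul (j : ι) : Integrable (fun y : ι → ℝ => y j * MvPolynomial.eval y G)
      (Measure.pi fun _ => gaussianReal 0 s) :=
    ((hasAllMoments_coord_gaussian s j).mul
      (HasAllMoments.mvPolynomial_eval (hasAllMoments_coord_gaussian s) G)).integrable
  have integrable_eval := integrable_eval_dotProduct_mul_gaussian s u w
  calc ∫ y, (u ⬝ᵥ y) * (p.eval (u ⬝ᵥ y) * q.eval (w ⬝ᵥ y)) ∂(Measure.pi fun _ => gaussianReal 0 s)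
      = ∑ j, u j * (s * ∫ y, MvPolynomial.eval y (MvPolynomial.pderiv j G)
          ∂(Measure.pi fun _ => gaussianReal 0 s)) := by
        simp only [eval_G]
        simp only [dotProduct, Finset.sum_mul, mul_assoc]
        rw [integral_finsetSum _ fun j _ => (integrable_coord_mul j).const_mul (u j)]
        simp only [integral_const_mul, integral_X_mul_gaussian]
    _ = _ := by
        simp only [eval_pderiv_G, integral_const_mul, integral_add
          ((integrable_eval _ _).const_mul _) ((integrable_eval _ _).const_mul _)]
        rw [dotProduct, dotProduct, Finset.sum_mul, Finset.sum_mul, ← Finset.sum_add_distrib,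
          Finset.mul_sum]
        exact Finset.sum_congr rfl fun j _ => by ring

lemma integral_hermiteVar_dotProduct_mul (s : ℝ≥0) {u : ι → ℝ} (hu : u ⬝ᵥ u = 1) (w : ι → ℝ)
    (k : ℕ) (q : ℝ[X]) :
    ∫ y, (hermiteVar s k).eval (u ⬝ᵥ y) * q.eval (w ⬝ᵥ y) ∂(Measure.pi fun _ => gaussianReal 0 s)
      = (s * (u ⬝ᵥ w)) ^ k * ∫ y, (derivative^[k] q).eval (w ⬝ᵥ y)
          ∂(Measure.pi fun _ => gaussianReal 0 s) := by
  induction k generalizing q with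
  | zero => simp [hermiteVar]
  | succ k ih =>
    have integrable_eval := integrable_eval_dotProduct_mul_gaussian s u w
    have integrable_X_mul : Integrable (fun y => (u ⬝ᵥ y) * ((hermiteVar s k).eval (u ⬝ᵥ y)
        * q.eval (w ⬝ᵥ y))) (Measure.pi fun _ => gaussianReal 0 s) := by
      have := integrable_eval (X * hermiteVar s k) q
      simpa only [Polynomial.eval_mul, Polynomial.eval_X, mul_assoc] using this
    have expand (y : ι → ℝ) : (hermiteVar s (k + 1)).eval (u ⬝ᵥ y) * q.eval (w ⬝ᵥ y)
        = (u ⬝ᵥ y) * ((hermiteVar s k).eval (u ⬝ᵥ y) * q.eval (w ⬝ᵥ y))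
          - s * ((derivative (hermiteVar s k)).eval (u ⬝ᵥ y) * q.eval (w ⬝ᵥ y)) := by
      simp only [hermiteVar, Polynomial.eval_sub, Polynomial.eval_mul, Polynomial.eval_X,
        Polynomial.eval_C]
      ring
    simp only [expand]
    rw [integral_sub integrable_X_mul ((integrable_eval _ _).const_mul _), integral_const_mul,
      integral_dotProduct_mul_gaussian, hu, ih, Function.iterate_succ_apply]
    ring

lemma integral_hermiteVar_mul_hermiteVar_dotProduct (s : ℝ≥0) {u w : ι → ℝ} (hu : u ⬝ᵥ u = 1)
    (hw : w ⬝ᵥ w = 1) (j k : ℕ) :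
    ∫ y, (hermiteVar s j).eval (u ⬝ᵥ y) * (hermiteVar s k).eval (w ⬝ᵥ y)
        ∂(Measure.pi fun _ => gaussianReal 0 s)
      = if j = k then k.factorial * (s * (u ⬝ᵥ w)) ^ k else 0 := by
  wlog hkj : k ≤ j generalizing u w j k
  · simp only [mul_comm ((hermiteVar s j).eval _)]
    rw [this hw hu k j (le_of_not_ge hkj), if_neg (by omega), if_neg (by omega)]
  rw [integral_hermiteVar_dotProduct_mul s hu]
  rcases hkj.eq_or_lt with rfl | hlt
  · simp [iterate_derivative_hermiteVar_self, mul_comm]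
  · rw [Polynomial.iterate_derivative_eq_zero ((natDegree_hermiteVar_le s k).trans_lt hlt),
      if_neg hlt.ne']
    simp

end GaussianVector

lemma integral_hermiteVar_mul_gaussianReal (s : ℝ≥0) (k : ℕ) (q : ℝ[X]) :
    ∫ x, (hermiteVar s k).eval x * q.eval x ∂(gaussianReal 0 s)
      = s ^ k * ∫ x, (derivative^[k] q).eval x ∂(gaussianReal 0 s) := by
  have unit_line := integral_hermiteVar_dotProduct_mul s (u := fun _ : Unit => (1 : ℝ))
    (by simp [dotProduct]) (fun _ => 1) k q
  have transfer (g : ℝ → ℝ) : ∫ y : Unit → ℝ, g (y default) ∂(Measure.pi fun _ => gaussianReal 0 s)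
      = ∫ x, g x ∂(gaussianReal 0 s) :=
    (measurePreserving_funUnique (gaussianReal 0 s) Unit).integral_comp'
      (f := MeasurableEquiv.funUnique Unit ℝ) g
  simpa [dotProduct, transfer fun x => (hermiteVar s k).eval x * q.eval x,
    transfer fun x => (derivative^[k] q).eval x] using unit_line

lemma integral_hermiteVar_mul_gaussianReal_eq_zero (s : ℝ≥0) {k : ℕ} {q : ℝ[X]}
    (hq : q.natDegree < k) :
    ∫ x, (hermiteVar s k).eval x * q.eval x ∂(gaussianReal 0 s) = 0 := by
  rw [integral_hermiteVar_mul_gaussianReal, Polynomial.iterate_derivative_eq_zero hq]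
  simp

lemma hermiteVar_expansion (s : ℝ≥0) {D : ℕ} {p : ℝ[X]} (hp : p.natDegree ≤ D) :
    p = ∑ k ∈ Finset.range (D + 1),
      C ((∫ x, (derivative^[k] p).eval x ∂(gaussianReal 0 s)) / k.factorial) * hermiteVar s k := by
  induction D generalizing p with
  | zero =>
    rw [Polynomial.eq_C_of_natDegree_le_zero hp]
    simp [hermiteVar]
  | succ D ih =>
    have integrable_eval (q : ℝ[X]) : Integrable (fun x => q.eval x) (gaussianReal 0 s) :=
      ((hasAllMoments_gaussianReal s).polynomial_eval q).integrable
    set tail : ℝ[X] := ∑ k ∈ Finset.range (D + 1), C ((∫ x, (derivative^[k + 1] p).eval x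
      ∂(gaussianReal 0 s)) / (k + 1).factorial) * hermiteVar s (k + 1) with htail
    have derivative_sub_tail : derivative (p - tail) = 0 := by
      rw [map_sub, htail, Polynomial.derivative_sum, sub_eq_zero,
        ih ((Polynomial.natDegree_derivative_le p).trans (by omega))]
      refine Finset.sum_congr rfl fun k _ => ?_
      rw [Polynomial.derivative_C_mul, derivative_hermiteVar_succ, ← mul_assoc, ← Polynomial.C_mul,
        Function.iterate_succ_apply, Nat.factorial_succ]
      push_cast
      field_simp
    have integral_tail : ∫ x, tail.eval x ∂(gaussianReal 0 s) = 0 := by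
      simp only [htail, Polynomial.eval_finsetSum, Polynomial.eval_mul, Polynomial.eval_C]
      rw [integral_finsetSum _ fun k _ => (integrable_eval _).const_mul _]
      refine Finset.sum_eq_zero fun k _ => ?_
      have := integral_hermiteVar_mul_gaussianReal_eq_zero s (k := k + 1) (q := 1) (by simp)
      simp only [Polynomial.eval_one, mul_one] at this
      rw [integral_const_mul, this, mul_zero]
    obtain ⟨c, hc⟩ : ∃ c, p = C c + tail :=
      ⟨_, sub_eq_iff_eq_add.1 <|
        Polynomial.eq_C_of_natDegree_eq_zero (Polynomial.derivative_eq_zero.1 derivative_sub_tail)⟩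
    have integral_p : ∫ x, p.eval x ∂(gaussianReal 0 s) = c := by
      simp [hc, integral_add (integrable_const c) (integrable_eval _), integral_tail]
    rw [Finset.sum_range_succ', ← htail, Function.iterate_zero, id, integral_p, add_comm]
    simpa [hermiteVar] using hc

/-- The coefficient of `hermiteVar s k` in the Hermite expansion of the likelihood ratio
`dν / dN(0, s)`. -/
noncomputable def hermiteCoeff (s : ℝ) (ν : Measure ℝ) (k : ℕ) : ℝ :=
  (∫ x, (hermiteVar s k).eval x ∂ν) / (k.factorial * s ^ k)

lemma integral_eq_sum_hermiteCoeff {ν : Measure ℝ} [IsFiniteMeasure ν]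
    (hν : HasAllMoments (fun x => x) ν) {s : ℝ≥0} (hs : s ≠ 0) {D : ℕ} {p : ℝ[X]}
    (hp : p.natDegree ≤ D) :
    ∫ x, p.eval x ∂ν = ∑ k ∈ Finset.range (D + 1),
      hermiteCoeff s ν k * ∫ x, (hermiteVar s k).eval x * p.eval x ∂(gaussianReal 0 s) := by
  have : (s : ℝ) ≠ 0 := by exact_mod_cast hs
  have integrable_hermite (k : ℕ) : Integrable (fun x => (hermiteVar s k).eval x) ν :=
    (hν.polynomial_eval _).integrable
  conv_lhs => rw [hermiteVar_expansion s hp]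
  simp only [Polynomial.eval_finsetSum, Polynomial.eval_mul, Polynomial.eval_C]
  rw [integral_finsetSum _ fun k _ => (integrable_hermite k).const_mul _]
  refine Finset.sum_congr rfl fun k _ => ?_
  rw [integral_const_mul, integral_hermiteVar_mul_gaussianReal, hermiteCoeff]
  field_simp

instance (N n : ℕ) (s : ℝ≥0) : IsProbabilityMeasure (iidGaussVec N n s) := by
  unfold iidGaussVec; infer_instance

lemma hasAllMoments_entry_iidGaussVec (N n : ℕ) (s : ℝ≥0) (i : Fin N) (j : Fin n) :
    HasAllMoments (fun Y => Y i j) (iidGaussVec N n s) :=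
  (hasAllMoments_coord_gaussian s j).comp_measurePreserving
    (measurePreserving_eval (fun _ => gaussVec n s) i)

lemma hasAllMoments_mulVec_iidGaussVec {N n : ℕ} (s : ℝ≥0) (u : Fin n → ℝ) (i : Fin N) :
    HasAllMoments (fun Y => (Matrix.of Y *ᵥ u) i) (iidGaussVec N n s) := by
  simp only [mulVec, dotProduct, mul_comm _ (u _)]
  exact .sum _ fun j => (hasAllMoments_entry_iidGaussVec N n s i j).const_mul (u j)

section LowDegree

variable {ι : Type*} [Fintype ι]

/-- The component along the multi-index `α` in the Hermite expansion of the likelihood ratio of the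
product measure `ν^ι` with respect to the Gaussian `N(0, s)^ι`. -/
noncomputable def hermiteComponent (s : ℝ) (ν : Measure ℝ) (α : ι → ℕ) (v : ι → ℝ) : ℝ :=
  ∏ i, hermiteCoeff s ν (α i) * (hermiteVar s (α i)).eval (v i)

lemma HasAllMoments.hermiteComponent {Ω : Type*} [MeasurableSpace Ω] {μ : Measure Ω}
    [IsFiniteMeasure μ] {V : ι → Ω → ℝ} (hV : ∀ i, HasAllMoments (V i) μ) (s : ℝ) (ν : Measure ℝ)
    (α : ι → ℕ) : HasAllMoments (fun ω => hermiteComponent s ν α fun i => V i ω) μ :=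
  .prod _ fun i => ((hV i).polynomial_eval _).const_mul _

lemma integral_monomial_mul_hermiteComponent (ν : Measure ℝ) (s : ℝ≥0) (d α : ι → ℕ) :
    ∫ v, (∏ i, v i ^ d i) * hermiteComponent s ν α v ∂(Measure.pi fun _ => gaussianReal 0 s)
      = ∏ i, hermiteCoeff s ν (α i)
          * ∫ x, (hermiteVar s (α i)).eval x * x ^ d i ∂(gaussianReal 0 s) := by
  have merge (v : ι → ℝ) : (∏ i, v i ^ d i) * hermiteComponent s ν α v
      = ∏ i, hermiteCoeff s ν (α i) * ((hermiteVar s (α i)).eval (v i) * v i ^ d i) := by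
    rw [hermiteComponent, ← Finset.prod_mul_distrib]
    exact Finset.prod_congr rfl fun i _ => by ring
  simp only [merge]
  rw [integral_fintype_prod_eq_prod (f := fun i (x : ℝ) =>
    hermiteCoeff s ν (α i) * ((hermiteVar s (α i)).eval x * x ^ d i))]
  simp only [integral_const_mul]

lemma hasAllMoments_monomial_pi {ν : Measure ℝ} [IsProbabilityMeasure ν]
    (hν : HasAllMoments (fun x => x) ν) (d : ι → ℕ) :
    HasAllMoments (fun v : ι → ℝ => ∏ i, v i ^ d i) (Measure.pi fun _ => ν) :=
  .prod _ fun i => by simpa using (hν.coord_pi i).polynomial_eval (X ^ d i)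

variable [DecidableEq ι]

/-- The multi-indices `α : ι → ℕ` of total degree at most `D`. -/
def multiIdx (ι : Type*) [Fintype ι] [DecidableEq ι] (D : ℕ) : Finset (ι → ℕ) :=
  (Fintype.piFinset fun _ => Finset.range (D + 1)).filter fun α => ∑ i, α i ≤ D

lemma sum_multiIdx_prod_eq_prod_sum {D : ℕ} {A : ι → ℕ → ℝ} {d : ι → ℕ} (hd : ∑ i, d i ≤ D)
    (hA : ∀ i k, d i < k → A i k = 0) :
    ∑ α ∈ multiIdx ι D, ∏ i, A i (α i) = ∏ i, ∑ k ∈ Finset.range (D + 1), A i k := by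
  rw [Finset.prod_univ_sum, multiIdx]
  refine Finset.sum_filter_of_ne fun α _ hα => (Finset.sum_le_sum fun i _ => ?_).trans hd
  by_contra h
  exact hα (Finset.prod_eq_zero (Finset.mem_univ i) (hA i _ (not_le.1 h)))

/-- The projection to polynomials of degree at most `D` of the likelihood ratio of the product
measure `ν^ι` with respect to the Gaussian `N(0, s)^ι`. -/
noncomputable def lowDegRatio (s : ℝ) (ν : Measure ℝ) (D : ℕ) (v : ι → ℝ) : ℝ :=
  ∑ α ∈ multiIdx ι D, hermiteComponent s ν α v

lemma HasAllMoments.lowDegRatio {Ω : Type*} [MeasurableSpace Ω] {μ : Measure Ω} [IsFiniteMeasure μ]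
    {V : ι → Ω → ℝ} (hV : ∀ i, HasAllMoments (V i) μ) (s : ℝ) (ν : Measure ℝ) (D : ℕ) :
    HasAllMoments (fun ω => lowDegRatio s ν D fun i => V i ω) μ :=
  .sum _ fun _ => .hermiteComponent hV s ν _

lemma integral_monomial_mul_lowDegRatio {ν : Measure ℝ} [IsFiniteMeasure ν]
    (hν : HasAllMoments (fun x => x) ν) {s : ℝ≥0} (hs : s ≠ 0) {D : ℕ} {d : ι → ℕ}
    (hd : ∑ i, d i ≤ D) :
    ∫ v, (∏ i, v i ^ d i) * lowDegRatio s ν D v ∂(Measure.pi fun _ => gaussianReal 0 s)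
      = ∏ i, ∫ x, x ^ d i ∂ν := by
  simp only [lowDegRatio, Finset.mul_sum]
  rw [integral_finsetSum _ fun α _ =>
    ((hasAllMoments_monomial_pi (hasAllMoments_gaussianReal s) d).mul
      (.hermiteComponent (hasAllMoments_coord_gaussian s) s ν α)).integrable]
  simp only [integral_monomial_mul_hermiteComponent]
  rw [sum_multiIdx_prod_eq_prod_sum (A := fun i k => hermiteCoeff s ν k
    * ∫ x, (hermiteVar s k).eval x * x ^ d i ∂(gaussianReal 0 s)) hd]
  · refine Finset.prod_congr rfl fun i _ => ?_
    have hdi : d i ≤ D :=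
      (Finset.single_le_sum (fun _ _ => Nat.zero_le _) (Finset.mem_univ i)).trans hd
    simpa using (integral_eq_sum_hermiteCoeff hν hs (p := X ^ d i) (by simpa using hdi)).symm
  · intro i k hk
    have orthogonal := integral_hermiteVar_mul_gaussianReal_eq_zero s (k := k) (q := X ^ d i)
      (by simpa using hk)
    simp only [Polynomial.eval_pow, Polynomial.eval_X] at orthogonal
    rw [orthogonal, mul_zero]

lemma integral_mvPolynomial_eq_integral_mul_lowDegRatio {ν : Measure ℝ} [IsProbabilityMeasure ν]
    (hν : HasAllMoments (fun x => x) ν) {s : ℝ≥0} (hs : s ≠ 0) {D : ℕ} {p : MvPolynomial ι ℝ}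
    (hp : p.totalDegree ≤ D) :
    ∫ v, MvPolynomial.eval v p ∂(Measure.pi fun _ => ν)
      = ∫ v, MvPolynomial.eval v p * lowDegRatio s ν D v
          ∂(Measure.pi fun _ => gaussianReal 0 s) := by
  have degree_le (d : ι →₀ ℕ) (hd : d ∈ p.support) : ∑ i, d i ≤ D := by
    rw [← Finsupp.sum_fintype d (fun _ e => e) fun _ => rfl]
    exact (MvPolynomial.le_totalDegree hd).trans hp
  simp only [MvPolynomial.eval_eq', Finset.sum_mul, mul_assoc]
  rw [integral_finsetSum _ fun (d : ι →₀ ℕ) _ =>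
      ((hasAllMoments_monomial_pi hν d).const_mul (MvPolynomial.coeff d p)).integrable,
    integral_finsetSum _ fun (d : ι →₀ ℕ) _ =>
      (((hasAllMoments_monomial_pi (hasAllMoments_gaussianReal s) d).mul
        (.lowDegRatio (hasAllMoments_coord_gaussian s) s ν D)).const_mul
          (MvPolynomial.coeff d p)).integrable]
  refine Finset.sum_congr rfl fun d hd => ?_
  rw [integral_const_mul, integral_const_mul,
    integral_monomial_mul_lowDegRatio hν hs (degree_le d hd),
    integral_fintype_prod_eq_prod (f := fun i (x : ℝ) => x ^ d i)]

/-- The squared norm of the degree-`k` Hermite component of the likelihood ratio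
`dν / dN(0, s)`. -/
noncomputable def hermiteWeight (s : ℝ) (ν : Measure ℝ) (k : ℕ) : ℝ :=
  hermiteCoeff s ν k ^ 2 * (k.factorial * s ^ k)

lemma hermiteWeight_nonneg {s : ℝ} (hs : 0 ≤ s) (ν : Measure ℝ) (k : ℕ) :
    0 ≤ hermiteWeight s ν k := by
  unfold hermiteWeight
  positivity

lemma hermiteWeight_zero (s : ℝ) (ν : Measure ℝ) [IsProbabilityMeasure ν] :
    hermiteWeight s ν 0 = 1 := by
  simp [hermiteWeight, hermiteCoeff, hermiteVar]

lemma hermiteComponent_mulVec {N n : ℕ} (s : ℝ) (ν : Measure ℝ) (α : Fin N → ℕ)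
    (Y : Fin N → Fin n → ℝ) (u : Fin n → ℝ) :
    hermiteComponent s ν α (Matrix.of Y *ᵥ u)
      = ∏ i, hermiteCoeff s ν (α i) * (hermiteVar s (α i)).eval (u ⬝ᵥ Y i) := by
  simp only [hermiteComponent, mulVec, dotProduct_comm u]
  rfl

lemma integral_hermiteComponent_mulVec_mul (ν : Measure ℝ) (s : ℝ≥0) {N n : ℕ}
    {u w : Fin n → ℝ} (hu : u ⬝ᵥ u = 1) (hw : w ⬝ᵥ w = 1) (α β : Fin N → ℕ) :
    ∫ Y, hermiteComponent s ν α (Matrix.of Y *ᵥ u) * hermiteComponent s ν β (Matrix.of Y *ᵥ w)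
        ∂(iidGaussVec N n s)
      = if α = β then (∏ i, hermiteWeight s ν (α i)) * (u ⬝ᵥ w) ^ ∑ i, α i else 0 := by
  have merge (Y : Fin N → Fin n → ℝ) :
      hermiteComponent s ν α (Matrix.of Y *ᵥ u) * hermiteComponent s ν β (Matrix.of Y *ᵥ w)
        = ∏ i, hermiteCoeff s ν (α i) * hermiteCoeff s ν (β i)
          * ((hermiteVar s (α i)).eval (u ⬝ᵥ Y i) * (hermiteVar s (β i)).eval (w ⬝ᵥ Y i)) := by
    rw [hermiteComponent_mulVec, hermiteComponent_mulVec, ← Finset.prod_mul_distrib]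
    exact Finset.prod_congr rfl fun i _ => by ring
  simp only [merge]
  rw [iidGaussVec, integral_fintype_prod_eq_prod (f := fun i (y : Fin n → ℝ) =>
    hermiteCoeff s ν (α i) * hermiteCoeff s ν (β i)
      * ((hermiteVar s (α i)).eval (u ⬝ᵥ y) * (hermiteVar s (β i)).eval (w ⬝ᵥ y)))]
  simp only [integral_const_mul, gaussVec, integral_hermiteVar_mul_hermiteVar_dotProduct s hu hw]
  split_ifs with h
  · rw [← h, ← Finset.prod_pow_eq_pow_sum, ← Finset.prod_mul_distrib]
    refine Finset.prod_congr rfl fun i _ => ?_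
    rw [if_pos rfl, hermiteWeight]
    ring
  · obtain ⟨i, hi⟩ := Function.ne_iff.1 h
    exact Finset.prod_eq_zero (Finset.mem_univ i) (by rw [if_neg hi, mul_zero])

lemma integral_lowDegRatio_mulVec_mul (ν : Measure ℝ) (s : ℝ≥0) (D : ℕ) {N n : ℕ}
    {u w : Fin n → ℝ} (hu : u ⬝ᵥ u = 1) (hw : w ⬝ᵥ w = 1) :
    ∫ Y, lowDegRatio s ν D (Matrix.of Y *ᵥ u) * lowDegRatio s ν D (Matrix.of Y *ᵥ w)
        ∂(iidGaussVec N n s)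
      = ∑ α ∈ multiIdx (Fin N) D, (∏ i, hermiteWeight s ν (α i)) * (u ⬝ᵥ w) ^ ∑ i, α i := by
  have integrable_term (α β : Fin N → ℕ) : Integrable (fun Y =>
      hermiteComponent s ν α (Matrix.of Y *ᵥ u) * hermiteComponent s ν β (Matrix.of Y *ᵥ w))
      (iidGaussVec N n s) :=
    ((HasAllMoments.hermiteComponent (hasAllMoments_mulVec_iidGaussVec s u) s ν α).mul
      (.hermiteComponent (hasAllMoments_mulVec_iidGaussVec s w) s ν β)).integrable
  simp only [lowDegRatio, Finset.sum_mul_sum]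
  rw [integral_finsetSum _ fun α _ => integrable_finsetSum _ fun β _ => integrable_term α β]
  refine Finset.sum_congr rfl fun α hα => ?_
  rw [integral_finsetSum _ fun β _ => integrable_term α β]
  simp [integral_hermiteComponent_mulVec_mul ν s hu hw, hα]

end LowDegree

section Rotation

variable {ι : Type*} [Fintype ι] [DecidableEq ι]

lemma exists_orthonormalBasis_eq_row {Q : Matrix ι ι ℝ} (hQ : Q * Qᵀ = 1) :
    ∃ b : OrthonormalBasis ι ℝ (EuclideanSpace ℝ ι), ∀ i, b i = WithLp.toLp 2 (Q i) := by
  have orthonormal_rows : Orthonormal ℝ fun i => WithLp.toLp 2 (Q i) := by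
    rw [orthonormal_iff_ite]
    intro i j
    have entry := congrFun (congrFun hQ i) j
    rw [Matrix.mul_apply, Matrix.one_apply] at entry
    rw [← entry, EuclideanSpace.inner_toLp_toLp, star_trivial, dotProduct_comm]
    rfl
  obtain ⟨b, hb⟩ := (orthonormal_rows.comp Subtype.val Subtype.val_injective
    ).exists_orthonormalBasis_extension_of_card_eq (s := Set.univ)
    (v := fun i => WithLp.toLp 2 (Q i)) finrank_euclideanSpace
  exact ⟨b, fun i => hb i trivial⟩

lemma measurePreserving_vecMul_gaussian_one {Q : Matrix ι ι ℝ} (hQ : Q * Qᵀ = 1) :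
    MeasurePreserving (fun y : ι → ℝ => y ᵥ* Q)
      (Measure.pi fun _ => gaussianReal 0 1) (Measure.pi fun _ => gaussianReal 0 1) := by
  have measurable_vecMul : Measurable fun y : ι → ℝ => y ᵥ* Q := by unfold vecMul; fun_prop
  obtain ⟨b, hb⟩ := exists_orthonormalBasis_eq_row hQ
  have sum_smul_basis : (fun y : ι → ℝ => ∑ i, y i • b i)
      = MeasurableEquiv.toLp 2 (ι → ℝ) ∘ fun y => y ᵥ* Q := by
    ext y j
    simp [hb, vecMul, dotProduct]
  refine ⟨measurable_vecMul, (MeasurableEquiv.toLp 2 (ι → ℝ)).map_measurableEquiv_injective ?_⟩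
  rw [Measure.map_map (by fun_prop) measurable_vecMul, ← sum_smul_basis,
    ← stdGaussian_eq_map_pi_orthonormalBasis]
  exact map_pi_eq_stdGaussian.symm

lemma measurePreserving_vecMul_gaussian (s : ℝ≥0) {Q : Matrix ι ι ℝ} (hQ : Q * Qᵀ = 1) :
    MeasurePreserving (fun y : ι → ℝ => y ᵥ* Q)
      (Measure.pi fun _ => gaussianReal 0 s) (Measure.pi fun _ => gaussianReal 0 s) := by
  have measurable_vecMul : Measurable fun y : ι → ℝ => y ᵥ* Q := by unfold vecMul; fun_prop
  have scale : MeasurePreserving (fun (y : ι → ℝ) i => √s * y i)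
      (Measure.pi fun _ => gaussianReal 0 1) (Measure.pi fun _ => gaussianReal 0 s) := by
    refine measurePreserving_pi _ _ fun _ => ⟨by fun_prop, ?_⟩
    rw [gaussianReal_map_const_mul, mul_zero]
    congr
    ext
    simp
  have commute : (fun y : ι → ℝ => y ᵥ* Q) ∘ (fun y i => √s * y i)
      = (fun y i => √s * y i) ∘ fun y => y ᵥ* Q :=
    funext fun y => smul_vecMul (√s) y Q
  refine ⟨measurable_vecMul, ?_⟩
  rw [← scale.map_eq, Measure.map_map measurable_vecMul scale.measurable, commute,
    (scale.comp (measurePreserving_vecMul_gaussian_one hQ)).map_eq, scale.map_eq]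

end Rotation

lemma measurePreserving_mul_iidGaussVec (N : ℕ) {n : ℕ} (s : ℝ≥0) {Q : Matrix (Fin n) (Fin n) ℝ}
    (hQ : Q * Qᵀ = 1) :
    MeasurePreserving (fun (Y : Fin N → Fin n → ℝ) i => Y i ᵥ* Q)
      (iidGaussVec N n s) (iidGaussVec N n s) :=
  measurePreserving_pi _ _ fun _ => measurePreserving_vecMul_gaussian s hQ

lemma totalDegree_bind₁_le {σ τ R : Type*} [CommSemiring R] (p : MvPolynomial σ R)
    {g : σ → MvPolynomial τ R} (hg : ∀ i, (g i).totalDegree ≤ 1) :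
    (MvPolynomial.bind₁ g p).totalDegree ≤ p.totalDegree := by
  rw [MvPolynomial.bind₁, MvPolynomial.aeval_def, MvPolynomial.eval₂_eq]
  refine MvPolynomial.totalDegree_finsetSum_le fun d hd => ?_
  calc (MvPolynomial.C (MvPolynomial.coeff d p) * ∏ i ∈ d.support, g i ^ d i).totalDegree
      ≤ 0 + ∑ i ∈ d.support, d i * (g i).totalDegree := by
        refine (MvPolynomial.totalDegree_mul _ _).trans (add_le_add ?_ ?_)
        · rw [MvPolynomial.totalDegree_C]
        · exact (MvPolynomial.totalDegree_finsetProd _ _).trans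
            (Finset.sum_le_sum fun i _ => MvPolynomial.totalDegree_pow _ _)
    _ ≤ ∑ i ∈ d.support, d i := by
        rw [zero_add]
        exact Finset.sum_le_sum fun i _ => by simpa using Nat.mul_le_mul_left (d i) (hg i)
    _ ≤ p.totalDegree := MvPolynomial.le_totalDegree hd

section Planted

variable {N n m D : ℕ}

lemma rowCat_eq_cons (a : ℝ) (b : Fin m → ℝ) : rowCat (n := m + 1) a b = Fin.cons a b := by
  ext j
  cases j using Fin.cases <;> rfl

lemma gaussBasis_mul_apply (v : Fin N → ℝ) (B : Fin N → Fin m → ℝ)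
    (Q : Matrix (Fin (m + 1)) (Fin (m + 1)) ℝ) (i : Fin N) (j : Fin (m + 1)) :
    (gaussBasis (n := m + 1) v B * Q) i j = v i * Q 0 j + ∑ k, B i k * Q k.succ j := by
  simp [gaussBasis, Matrix.mul_apply, rowCat_eq_cons, Fin.sum_univ_succ]

lemma exists_mvPolynomial_eval_eq_gaussBasis_mul (f : MvPolynomial (Fin N × Fin (m + 1)) ℝ)
    (B : Fin N → Fin m → ℝ) (Q : Matrix (Fin (m + 1)) (Fin (m + 1)) ℝ) :
    ∃ p : MvPolynomial (Fin N) ℝ, p.totalDegree ≤ f.totalDegree ∧ ∀ v, MvPolynomial.eval v p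
      = MvPolynomial.eval (fun q => (gaussBasis (n := m + 1) v B * Q) q.1 q.2) f := by
  refine ⟨MvPolynomial.bind₁ (fun q => MvPolynomial.C (Q 0 q.2) * MvPolynomial.X q.1
    + MvPolynomial.C (∑ k, B q.1 k * Q k.succ q.2)) f, totalDegree_bind₁_le f fun q => ?_,
    fun v => ?_⟩
  · refine (MvPolynomial.totalDegree_add _ _).trans (max_le ?_ ?_)
    · exact (MvPolynomial.totalDegree_mul _ _).trans (by simp)
    · rw [MvPolynomial.totalDegree_C]
      exact zero_le_one
  · rw [MvPolynomial.eval, MvPolynomial.eval₂Hom_bind₁]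
    congr 2 with q
    simp [gaussBasis_mul_apply, mul_comm]

lemma measurePreserving_gaussBasis (N m : ℕ) (s : ℝ≥0) :
    MeasurePreserving (fun (z : (Fin N → ℝ) × (Fin N → Fin m → ℝ)) i j =>
        gaussBasis (n := m + 1) z.1 z.2 i j)
      ((Measure.pi fun _ => gaussianReal 0 s).prod (iidGaussVec N m s))
      (iidGaussVec N (m + 1) s) := by
  have transpose := (measurePreserving_arrowProdEquivProdArrow ℝ (Fin m → ℝ) (Fin N)
    (fun _ => gaussianReal 0 s) fun _ => gaussVec m s).symm
  have append_row := (measurePreserving_piFinSuccAbove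
    (fun _ : Fin (m + 1) => gaussianReal 0 s) 0).symm
  have assemble : (fun (z : (Fin N → ℝ) × (Fin N → Fin m → ℝ)) i j =>
        gaussBasis (n := m + 1) z.1 z.2 i j)
      = (fun y i => (MeasurableEquiv.piFinSuccAbove (fun _ : Fin (m + 1) => ℝ) 0).symm (y i))
        ∘ (MeasurableEquiv.arrowProdEquivProdArrow ℝ (Fin m → ℝ) (Fin N)).symm := by
    ext z i : 2
    exact (rowCat_eq_cons _ _).trans (Fin.insertNth_zero' _ _).symm
  rw [assemble]
  exact (measurePreserving_pi _ _ fun _ => append_row).comp transpose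

lemma mulVec_row_eq_single {ι : Type*} [Fintype ι] [DecidableEq ι] {Q : Matrix ι ι ℝ}
    (hQ : Q * Qᵀ = 1) (i : ι) : Q *ᵥ Q i = Pi.single i 1 := by
  ext j
  simpa [Matrix.mul_apply, mulVec, dotProduct, Matrix.one_apply, Pi.single_apply] using
    congrFun (congrFun hQ j) i

lemma hasAllMoments_eval_iidGaussVec {n : ℕ} (s : ℝ≥0) (f : MvPolynomial (Fin N × Fin n) ℝ) :
    HasAllMoments (fun Y => MvPolynomial.eval (fun q => Y q.1 q.2) f) (iidGaussVec N n s) := by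
  have entry (q : Fin N × Fin n) := hasAllMoments_entry_iidGaussVec N n s q.1 q.2
  exact .mvPolynomial_eval entry f

lemma hasAllMoments_lowDegRatio_mulVec {n : ℕ} (ν : Measure ℝ) (s : ℝ≥0) (D : ℕ)
    (u : Fin n → ℝ) :
    HasAllMoments (fun Y => lowDegRatio s ν D (Matrix.of Y *ᵥ u)) (iidGaussVec N n s) :=
  HasAllMoments.lowDegRatio (hasAllMoments_mulVec_iidGaussVec s u) s ν D

lemma integral_gaussBasis_mul_eq {ν : Measure ℝ} [IsProbabilityMeasure ν]
    (hν : HasAllMoments (fun x => x) ν) {s : ℝ≥0} (hs : s ≠ 0)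
    {f : MvPolynomial (Fin N × Fin (m + 1)) ℝ} (hf : f.totalDegree ≤ D)
    {Q : Matrix (Fin (m + 1)) (Fin (m + 1)) ℝ} (hQ : Q * Qᵀ = 1) :
    ∫ B, ∫ v, MvPolynomial.eval (fun q => (gaussBasis (n := m + 1) v B * Q) q.1 q.2) f
        ∂(Measure.pi fun _ => ν) ∂(iidGaussVec N m s)
      = ∫ Y, MvPolynomial.eval (fun q => Y q.1 q.2) f * lowDegRatio s ν D (Matrix.of Y *ᵥ Q 0)
        ∂(iidGaussVec N (m + 1) s) := by
  set G : (Fin N → Fin (m + 1) → ℝ) → ℝ := fun Y =>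
    MvPolynomial.eval (fun q => Y q.1 q.2) f * lowDegRatio s ν D (Matrix.of Y *ᵥ Q 0) with hG
  have integrable_G : Integrable G (iidGaussVec N (m + 1) s) :=
    ((hasAllMoments_eval_iidGaussVec s f).mul
      (hasAllMoments_lowDegRatio_mulVec ν s D (Q 0))).integrable
  have assemble := (measurePreserving_mul_iidGaussVec N s hQ).comp
    (measurePreserving_gaussBasis N m s)
  have change_first_column (B : Fin N → Fin m → ℝ) :
      ∫ v, MvPolynomial.eval (fun q => (gaussBasis (n := m + 1) v B * Q) q.1 q.2) f
        ∂(Measure.pi fun _ => ν)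
      = ∫ v, G (fun i => gaussBasis (n := m + 1) v B i ᵥ* Q)
        ∂(Measure.pi fun _ => gaussianReal 0 s) := by
    obtain ⟨p, hpf, hp⟩ := exists_mvPolynomial_eval_eq_gaussBasis_mul f B Q
    have first_column (v : Fin N → ℝ) :
        Matrix.of (fun i => gaussBasis (n := m + 1) v B i ᵥ* Q) *ᵥ Q 0 = v := by
      ext i
      change (gaussBasis (n := m + 1) v B i ᵥ* Q) ⬝ᵥ Q 0 = v i
      rw [← dotProduct_mulVec, mulVec_row_eq_single hQ]
      simp [gaussBasis, rowCat_eq_cons]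
    simp only [← hp, hG, first_column]
    rw [integral_mvPolynomial_eq_integral_mul_lowDegRatio hν hs (hpf.trans hf)]
    simp only [hp]
    rfl
  simp only [change_first_column]
  refine (integral_prod_symm _ (assemble.integrable_comp_of_integrable integrable_G)).symm.trans ?_
  rw [← assemble.map_eq] at integrable_G ⊢
  exact (integral_map assemble.measurable.aemeasurable integrable_G.aestronglyMeasurable).symm

/-- The law of the observation `Ỹ = YQ`, where `Q` has law `μQ` and, independently, the entries of
the first column of `Y` are i.i.d. from `ν` and those of the other columns are i.i.d. `N(0, s)`. -/
noncomputable def plantedMeasure (N n : ℕ) (ν : Measure ℝ) (s : ℝ≥0)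
    (μQ : Measure (Fin n → Fin n → ℝ)) : Measure (Fin N → Fin n → ℝ) :=
  Measure.map (fun w : (Fin N → ℝ) × (Fin n → Fin n → ℝ) × (Fin N → Fin (n - 1) → ℝ) =>
      fun i j => (gaussBasis w.1 w.2.2 * Matrix.of w.2.1) i j)
    ((Measure.pi fun _ => ν).prod (μQ.prod (iidGaussVec N (n - 1) s)))

lemma hasAllMoments_entry_of_ae_orthogonal {μQ : Measure (Fin n → Fin n → ℝ)}
    [IsFiniteMeasure μQ] (horth : ∀ᵐ Q ∂μQ, (Matrix.of Q)ᵀ * Matrix.of Q = 1) (i j : Fin n) :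
    HasAllMoments (fun Q => Q i j) μQ := by
  refine HasAllMoments.of_ae_bound
    (by fun_prop : Measurable fun Q : Fin n → Fin n → ℝ => Q i j).aestronglyMeasurable 1
    (horth.mono fun Q hQ => ?_)
  have unitary : Matrix.of Q ∈ Matrix.unitaryGroup (Fin n) ℝ := Matrix.mem_unitaryGroup_iff'.2 hQ
  exact entry_norm_bound_of_unitary unitary i j

lemma hasAllMoments_gaussBasis_mul {ν : Measure ℝ} [IsProbabilityMeasure ν]
    (hν : HasAllMoments (fun x => x) ν) (s : ℝ≥0)
    {μQ : Measure (Fin (m + 1) → Fin (m + 1) → ℝ)} [IsProbabilityMeasure μQ]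
    (horth : ∀ᵐ Q ∂μQ, (Matrix.of Q)ᵀ * Matrix.of Q = 1) (i : Fin N) (j : Fin (m + 1)) :
    HasAllMoments (fun w : (Fin N → ℝ) × (Fin (m + 1) → Fin (m + 1) → ℝ) × (Fin N → Fin m → ℝ) =>
        (gaussBasis (n := m + 1) w.1 w.2.2 * Matrix.of w.2.1) i j)
      ((Measure.pi fun _ => ν).prod (μQ.prod (iidGaussVec N m s))) := by
  have rotation (k : Fin (m + 1)) := ((hasAllMoments_entry_of_ae_orthogonal horth k j
    ).comp_measurePreserving measurePreserving_fst).comp_measurePreserving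
      (measurePreserving_snd (μ := Measure.pi fun _ : Fin N => ν)
        (ν := μQ.prod (iidGaussVec N m s)))
  have noise (k : Fin m) := ((hasAllMoments_entry_iidGaussVec N m s i k
    ).comp_measurePreserving measurePreserving_snd).comp_measurePreserving
      (measurePreserving_snd (μ := Measure.pi fun _ : Fin N => ν)
        (ν := μQ.prod (iidGaussVec N m s)))
  have signal := (hν.coord_pi i).comp_measurePreserving
    (measurePreserving_fst (ν := μQ.prod (iidGaussVec N m s)))
  simp only [gaussBasis_mul_apply]
  exact (signal.mul (rotation 0)).add (.sum _ fun k => (noise k).mul (rotation k.succ))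

lemma integral_plantedMeasure {ν : Measure ℝ} [IsProbabilityMeasure ν]
    (hν : HasAllMoments (fun x => x) ν) {s : ℝ≥0} (hs : s ≠ 0)
    {μQ : Measure (Fin (m + 1) → Fin (m + 1) → ℝ)} [IsProbabilityMeasure μQ]
    (horth : ∀ᵐ Q ∂μQ, (Matrix.of Q)ᵀ * Matrix.of Q = 1)
    {f : MvPolynomial (Fin N × Fin (m + 1)) ℝ} (hf : f.totalDegree ≤ D) :
    ∫ Y, MvPolynomial.eval (fun q => Y q.1 q.2) f ∂(plantedMeasure N (m + 1) ν s μQ)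
      = ∫ Q, ∫ Y, MvPolynomial.eval (fun q => Y q.1 q.2) f
          * lowDegRatio s ν D (Matrix.of Y *ᵥ Q 0) ∂(iidGaussVec N (m + 1) s) ∂μQ := by
  have entry (q : Fin N × Fin (m + 1)) := hasAllMoments_gaussBasis_mul hν s horth q.1 q.2
  have measurable_observation : AEMeasurable
      (fun (w : (Fin N → ℝ) × (Fin (m + 1) → Fin (m + 1) → ℝ) × (Fin N → Fin m → ℝ)) i j =>
        (gaussBasis (n := m + 1) w.1 w.2.2 * Matrix.of w.2.1) i j)
      ((Measure.pi fun _ => ν).prod (μQ.prod (iidGaussVec N m s))) :=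
    aemeasurable_pi_lambda _ fun i => aemeasurable_pi_lambda _ fun j =>
      (entry (i, j)).integrable.aemeasurable
  have integrable_f := (HasAllMoments.mvPolynomial_eval entry f).integrable
  have measurable_eval : Measurable fun Y : Fin N → Fin (m + 1) → ℝ =>
      MvPolynomial.eval (fun q => Y q.1 q.2) f := by
    simp only [MvPolynomial.eval_eq']
    fun_prop
  rw [plantedMeasure]
  refine (integral_map measurable_observation measurable_eval.aestronglyMeasurable).trans ?_
  refine (integral_prod_symm _ integrable_f).trans ?_
  refine (integral_prod _ integrable_f.integral_prod_right).trans ?_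
  exact integral_congr_ae (horth.mono fun Q hQ =>
    integral_gaussBasis_mul_eq hν hs hf (mul_eq_one_comm.1 hQ))

end Planted

section SignVector

variable {n : ℕ}

/-- The vector in `{-1, 1}ⁿ` encoded by a Boolean vector, with `true` for `1`. -/
def signVec (ε : Fin n → Bool) (i : Fin n) : ℝ := if ε i then 1 else -1

lemma signVec_dotProduct_self (ε : Fin n → Bool) : signVec ε ⬝ᵥ signVec ε = n := by
  have sq_entry (i : Fin n) : signVec ε i * signVec ε i = 1 := by
    rw [signVec]
    split_ifs <;> norm_num
  simp [dotProduct, sq_entry]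

lemma sum_exp_signVec_dotProduct (w : Fin n → ℝ) :
    ∑ ε : Fin n → Bool, Real.exp (signVec ε ⬝ᵥ w) = ∏ i, (2 * Real.cosh (w i)) := by
  have two_mul_cosh (i : Fin n) :
      2 * Real.cosh (w i) = ∑ b : Bool, Real.exp ((if b then 1 else -1) * w i) := by
    simp [Real.cosh_eq]
    ring
  simp_rw [two_mul_cosh, Finset.prod_univ_sum, Fintype.piFinset_univ, ← Real.exp_sum]
  rfl

lemma sum_exp_signVec_dotProduct_le (w : Fin n → ℝ) :
    ∑ ε : Fin n → Bool, Real.exp (signVec ε ⬝ᵥ w) ≤ 2 ^ n * Real.exp (w ⬝ᵥ w / 2) := by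
  rw [sum_exp_signVec_dotProduct, Finset.prod_mul_distrib, Finset.prod_const, Finset.card_univ,
    Fintype.card_fin]
  gcongr
  calc ∏ i, Real.cosh (w i) ≤ ∏ i, Real.exp (w i ^ 2 / 2) :=
        Finset.prod_le_prod (fun i _ => (Real.cosh_pos _).le)
          fun i _ => Real.cosh_le_exp_half_sq _
    _ = Real.exp (w ⬝ᵥ w / 2) := by
        rw [← Real.exp_sum, ← Finset.sum_div, dotProduct]
        simp only [pow_two]

lemma abs_pow_le_factorial_mul_cosh (t : ℝ) (d : ℕ) :
    |t| ^ d ≤ 2 * d.factorial * Real.cosh t := by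
  have pow_le := Real.pow_div_factorial_le_exp |t| (abs_nonneg t) d
  rw [div_le_iff₀ (by positivity)] at pow_le
  have exp_le : Real.exp |t| ≤ 2 * Real.cosh t := by
    rw [← Real.cosh_abs, Real.cosh_eq]
    linarith [Real.exp_pos (-|t|)]
  calc |t| ^ d ≤ Real.exp |t| * d.factorial := pow_le
    _ ≤ 2 * Real.cosh t * d.factorial := by gcongr
    _ = 2 * d.factorial * Real.cosh t := by ring

lemma sum_abs_signVec_dotProduct_pow_le {w : Fin n → ℝ} (hw : w ⬝ᵥ w = 1) (d : ℕ) :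
    ∑ ε : Fin n → Bool, |signVec ε ⬝ᵥ w| ^ d ≤ 2 ^ n * (4 * d.factorial) := by
  have exp_half_le : Real.exp (1 / 2) ≤ 2 := by
    have := Real.exp_bound_div_one_sub_of_interval (x := 1 / 2) (by norm_num) (by norm_num)
    norm_num at this ⊢
    exact this
  have sum_exp_le (w : Fin n → ℝ) (hw : w ⬝ᵥ w = 1) :
      ∑ ε : Fin n → Bool, Real.exp (signVec ε ⬝ᵥ w) ≤ 2 ^ n * 2 :=
    (sum_exp_signVec_dotProduct_le w).trans (by rw [hw]; gcongr)
  calc ∑ ε : Fin n → Bool, |signVec ε ⬝ᵥ w| ^ d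
      ≤ ∑ ε : Fin n → Bool, 2 * d.factorial * Real.cosh (signVec ε ⬝ᵥ w) :=
        Finset.sum_le_sum fun ε _ => abs_pow_le_factorial_mul_cosh _ d
    _ = d.factorial * (∑ ε : Fin n → Bool, Real.exp (signVec ε ⬝ᵥ w)
          + ∑ ε : Fin n → Bool, Real.exp (signVec ε ⬝ᵥ -w)) := by
        rw [← Finset.sum_add_distrib, Finset.mul_sum]
        refine Finset.sum_congr rfl fun ε _ => ?_
        rw [Real.cosh_eq, dotProduct_neg]
        ring
    _ ≤ d.factorial * (2 ^ n * 2 + 2 ^ n * 2) := by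
        gcongr
        · exact sum_exp_le w hw
        · exact sum_exp_le (-w) (by simpa using hw)
    _ = 2 ^ n * (4 * d.factorial) := by ring

end SignVector

section Overlap

variable {n : ℕ} {μ : Measure (Fin n → Fin n → ℝ)}

lemma exists_orthogonal_row_eq (i : Fin n) {a : Fin n → ℝ} (ha : a ⬝ᵥ a = 1) :
    ∃ R : Matrix (Fin n) (Fin n) ℝ, Rᵀ * R = 1 ∧ R i = a := by
  have orthonormal_singleton : Orthonormal ℝ (({i} : Set (Fin n)).domRestrict
      fun _ => (WithLp.toLp 2 a : EuclideanSpace ℝ (Fin n))) := by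
    rw [orthonormal_iff_ite]
    rintro ⟨j, rfl⟩ ⟨k, rfl⟩
    rw [if_pos rfl, EuclideanSpace.inner_eq_star_dotProduct]
    simpa using ha
  obtain ⟨b, hb⟩ := orthonormal_singleton.exists_orthonormalBasis_extension_of_card_eq (by simp)
  refine ⟨Matrix.of fun j k => b j k, mul_eq_one_comm.1 ?_, ?_⟩
  · ext j k
    have inner_eq := orthonormal_iff_ite.1 b.orthonormal j k
    rw [EuclideanSpace.inner_eq_star_dotProduct] at inner_eq
    rw [Matrix.mul_apply, Matrix.one_apply, ← inner_eq]
    simp [dotProduct, mul_comm]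
  · ext k
    simp only [Matrix.of_apply]
    rw [hb i rfl]

lemma row_dotProduct_self_of_orthogonal {Q : Fin n → Fin n → ℝ}
    (hQ : (Matrix.of Q)ᵀ * Matrix.of Q = 1) (i : Fin n) : Q i ⬝ᵥ Q i = 1 := by
  have mul_transpose : Matrix.of Q * (Matrix.of Q)ᵀ = 1 := mul_eq_one_comm.1 hQ
  simpa [Matrix.mul_apply, dotProduct] using congrFun (congrFun mul_transpose i) i

lemma integral_row_dotProduct_pow_eq
    (hinv : ∀ R : Matrix (Fin n) (Fin n) ℝ, Rᵀ * R = 1 →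
      Measure.map (fun Q => fun i j => (R * Matrix.of Q) i j) μ = μ)
    (i : Fin n) {a : Fin n → ℝ} (ha : a ⬝ᵥ a = 1) (x : Fin n → ℝ) (d : ℕ) :
    ∫ Q, (Q i ⬝ᵥ x) ^ d ∂μ = ∫ Q, (a ⬝ᵥ (Matrix.of Q *ᵥ x)) ^ d ∂μ := by
  obtain ⟨R, hR, rfl⟩ := exists_orthogonal_row_eq i ha
  have measurable_pow : Measurable fun Q : Fin n → Fin n → ℝ => (Q i ⬝ᵥ x) ^ d := by
    simp only [dotProduct]
    fun_prop
  have measurable_rotate : Measurable fun Q : Fin n → Fin n → ℝ =>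
      fun i j => (R * Matrix.of Q) i j := by
    simp only [Matrix.mul_apply, Matrix.of_apply]
    fun_prop
  conv_lhs => rw [← hinv R hR]
  rw [integral_map measurable_rotate.aemeasurable measurable_pow.aestronglyMeasurable]
  simp only [dotProduct_mulVec]
  rfl

lemma hasAllMoments_dotProduct_mulVec_of_ae_orthogonal [IsFiniteMeasure μ]
    (horth : ∀ᵐ Q ∂μ, (Matrix.of Q)ᵀ * Matrix.of Q = 1) (a x : Fin n → ℝ) :
    HasAllMoments (fun Q => a ⬝ᵥ (Matrix.of Q *ᵥ x)) μ := by
  simp only [dotProduct, mulVec, Matrix.of_apply]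
  exact .sum _ fun i => .mul (.const _) <| .sum _ fun j =>
    (hasAllMoments_entry_of_ae_orthogonal horth i j).mul (.const _)

lemma abs_integral_row_dotProduct_pow_le_integral_signVec
    (hinv : ∀ R : Matrix (Fin n) (Fin n) ℝ, Rᵀ * R = 1 →
      Measure.map (fun Q => fun i j => (R * Matrix.of Q) i j) μ = μ)
    (i : Fin n) (x : Fin n → ℝ) (d : ℕ) (ε : Fin n → Bool) :
    |∫ Q, (Q i ⬝ᵥ x) ^ d ∂μ| * √n ^ d ≤ ∫ Q, |signVec ε ⬝ᵥ (Matrix.of Q *ᵥ x)| ^ d ∂μ := by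
  have sqrt_pos : 0 < √(n : ℝ) := Real.sqrt_pos.2 (by exact_mod_cast i.pos)
  have unit : ((√n)⁻¹ • signVec ε) ⬝ᵥ ((√n)⁻¹ • signVec ε) = 1 := by
    rw [smul_dotProduct, dotProduct_smul, signVec_dotProduct_self, smul_eq_mul, smul_eq_mul,
      ← mul_assoc, ← mul_inv, Real.mul_self_sqrt n.cast_nonneg,
      inv_mul_cancel₀ (by exact_mod_cast i.pos.ne')]
  rw [integral_row_dotProduct_pow_eq hinv i unit]
  simp only [smul_dotProduct, smul_eq_mul, mul_pow, integral_const_mul]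
  rw [abs_mul, abs_of_pos (by positivity), mul_right_comm, ← mul_pow,
    inv_mul_cancel₀ sqrt_pos.ne', one_pow, one_mul]
  simpa only [abs_pow] using abs_integral_le_integral_abs
    (f := fun Q => (signVec ε ⬝ᵥ (Matrix.of Q *ᵥ x)) ^ d) (μ := μ)

lemma abs_integral_row_dotProduct_pow_le [IsProbabilityMeasure μ]
    (horth : ∀ᵐ Q ∂μ, (Matrix.of Q)ᵀ * Matrix.of Q = 1)
    (hinv : ∀ R : Matrix (Fin n) (Fin n) ℝ, Rᵀ * R = 1 →
      Measure.map (fun Q => fun i j => (R * Matrix.of Q) i j) μ = μ)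
    (i : Fin n) {x : Fin n → ℝ} (hx : x ⬝ᵥ x = 1) (d : ℕ) :
    |∫ Q, (Q i ⬝ᵥ x) ^ d ∂μ| * √n ^ d ≤ 4 * d.factorial := by
  have integrable_signVec (ε : Fin n → Bool) :
      Integrable (fun Q => |signVec ε ⬝ᵥ (Matrix.of Q *ᵥ x)| ^ d) μ := by
    simpa [abs_pow] using ((hasAllMoments_dotProduct_mulVec_of_ae_orthogonal horth (signVec ε) x
      ).polynomial_eval (Polynomial.X ^ d)).integrable.abs
  have sum_le : ∀ᵐ Q ∂μ, ∑ ε : Fin n → Bool, |signVec ε ⬝ᵥ (Matrix.of Q *ᵥ x)| ^ d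
      ≤ 2 ^ n * (4 * d.factorial) := horth.mono fun Q hQ => by
    refine sum_abs_signVec_dotProduct_pow_le ?_ d
    rw [dotProduct_mulVec, vecMul_mulVec, hQ, vecMul_one, hx]
  refine le_of_mul_le_mul_left (a := (2 : ℝ) ^ n) ?_ (by positivity)
  calc 2 ^ n * (|∫ Q, (Q i ⬝ᵥ x) ^ d ∂μ| * √n ^ d)
      = ∑ _ε : Fin n → Bool, |∫ Q, (Q i ⬝ᵥ x) ^ d ∂μ| * √n ^ d := by simp
    _ ≤ ∑ ε : Fin n → Bool, ∫ Q, |signVec ε ⬝ᵥ (Matrix.of Q *ᵥ x)| ^ d ∂μ :=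
        Finset.sum_le_sum fun ε _ =>
          abs_integral_row_dotProduct_pow_le_integral_signVec hinv i x d ε
    _ = ∫ Q, ∑ ε : Fin n → Bool, |signVec ε ⬝ᵥ (Matrix.of Q *ᵥ x)| ^ d ∂μ :=
        (integral_finsetSum _ fun ε _ => integrable_signVec ε).symm
    _ ≤ ∫ _Q, 2 ^ n * (4 * d.factorial : ℝ) ∂μ :=
        integral_mono_ae (integrable_finsetSum _ fun ε _ => integrable_signVec ε)
          (integrable_const _) sum_le
    _ = 2 ^ n * (4 * d.factorial) := by simp

end Overlap

section CauchySchwarz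

variable {A B : Type*} [MeasurableSpace A] [MeasurableSpace B] {μ : Measure A} {γ : Measure B}

lemma sq_integral_mul_le {f g : B → ℝ} (hf : MemLp f 2 γ) (hg : MemLp g 2 γ) :
    (∫ b, f b * g b ∂γ) ^ 2 ≤ (∫ b, f b ^ 2 ∂γ) * ∫ b, g b ^ 2 ∂γ := by
  have integrable_mul : Integrable (fun b => f b * g b) γ := hf.integrable_mul hg
  have nonneg_quadratic (t : ℝ) : 0 ≤ (∫ b, g b ^ 2 ∂γ) * (t * t)
      + 2 * (∫ b, f b * g b ∂γ) * t + ∫ b, f b ^ 2 ∂γ := by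
    calc 0 ≤ ∫ b, (t * g b + f b) ^ 2 ∂γ := integral_nonneg fun b => sq_nonneg _
      _ = ∫ b, (t * t * g b ^ 2 + 2 * t * (f b * g b) + f b ^ 2) ∂γ := by
          congr with b
          ring
      _ = (∫ b, g b ^ 2 ∂γ) * (t * t) + 2 * (∫ b, f b * g b ∂γ) * t + ∫ b, f b ^ 2 ∂γ := by
          have integrable_sq := hg.integrable_sq.const_mul (t * t)
          have integrable_cross := integrable_mul.const_mul (2 * t)
          have integrable_sum : Integrable
              (fun b => t * t * g b ^ 2 + 2 * t * (f b * g b)) γ :=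
            integrable_sq.add integrable_cross
          rw [integral_add integrable_sum hf.integrable_sq,
            integral_add integrable_sq integrable_cross, integral_const_mul, integral_const_mul]
          ring
  have discrim_nonpos := discrim_le_zero nonneg_quadratic
  rw [discrim] at discrim_nonpos
  linarith

variable [IsProbabilityMeasure μ] [IsProbabilityMeasure γ]

lemma sq_integral_integral_mul_le {f : B → ℝ} {L : A → B → ℝ} (hf : MemLp f 2 γ)
    (hL : MemLp (Function.uncurry L) 2 (μ.prod γ)) :
    (∫ a, ∫ b, f b * L a b ∂γ ∂μ) ^ 2
      ≤ (∫ b, f b ^ 2 ∂γ) * ∫ q, ∫ b, L q.1 b * L q.2 b ∂γ ∂(μ.prod μ) := by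
  have integrable_mul : Integrable (Function.uncurry fun a b => f b * L a b) (μ.prod γ) :=
    (hf.comp_measurePreserving measurePreserving_snd).integrable_mul hL
  have integrable_kernel : Integrable
      (Function.uncurry fun (q : A × A) b => L q.1 b * L q.2 b) ((μ.prod μ).prod γ) :=
    (hL.comp_measurePreserving (measurePreserving_fst.prod (.id γ))).integrable_mul
      (hL.comp_measurePreserving (measurePreserving_snd.prod (.id γ)))
  have sq_average (b : B) :
      (∫ a, L a b ∂μ) ^ 2 = ∫ q : A × A, L q.1 b * L q.2 b ∂(μ.prod μ) := by
    rw [integral_prod_mul (fun a => L a b) (fun a => L a b), pow_two]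
  have memLp_average : MemLp (fun b => ∫ a, L a b ∂μ) 2 γ := by
    have measurable_average : AEStronglyMeasurable (fun b => ∫ a, L a b ∂μ) γ :=
      hL.1.prod_swap.integral_prod_right'
    refine (memLp_two_iff_integrable_sq measurable_average).2 ?_
    simp only [sq_average]
    exact integrable_kernel.integral_prod_right
  calc (∫ a, ∫ b, f b * L a b ∂γ ∂μ) ^ 2 = (∫ b, f b * ∫ a, L a b ∂μ ∂γ) ^ 2 := by
        simp only [integral_integral_swap integrable_mul, integral_const_mul]
    _ ≤ (∫ b, f b ^ 2 ∂γ) * ∫ b, (∫ a, L a b ∂μ) ^ 2 ∂γ := sq_integral_mul_le hf memLp_average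
    _ = (∫ b, f b ^ 2 ∂γ) * ∫ q, ∫ b, L q.1 b * L q.2 b ∂γ ∂(μ.prod μ) := by
        simp only [sq_average, integral_integral_swap integrable_kernel]

end CauchySchwarz

section SecondMoment

lemma sum_multiIdx_prod_mul_le {ι : Type*} [Fintype ι] [DecidableEq ι] {D : ℕ} {w m : ℕ → ℝ}
    {c θ : ℝ} (hw : ∀ k, 0 ≤ w k) (hw0 : w 0 = 1) (hm0 : m 0 = 1) (hc : 0 ≤ c) (hθ : 0 ≤ θ)
    (hm : ∀ d ≤ D, m d ≤ c * θ ^ d) :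
    ∑ α ∈ multiIdx ι D, (∏ i, w (α i)) * m (∑ i, α i)
      ≤ c * (∑ k ∈ Finset.range (D + 1), w k * θ ^ k) ^ Fintype.card ι - (c - 1) := by
  have zero_mem : (0 : ι → ℕ) ∈ multiIdx ι D := by simp [multiIdx]
  have term_le (α : ι → ℕ) (hα : α ∈ multiIdx ι D) : (∏ i, w (α i)) * m (∑ i, α i)
      ≤ c * ∏ i, w (α i) * θ ^ α i - if α = 0 then c - 1 else 0 := by
    rcases eq_or_ne α 0 with rfl | hα0
    · simp [hw0, hm0]
    · rw [if_neg hα0, sub_zero, Finset.prod_mul_distrib, Finset.prod_pow_eq_pow_sum,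
        mul_left_comm]
      exact mul_le_mul_of_nonneg_left (hm _ (Finset.mem_filter.1 hα).2)
        (Finset.prod_nonneg fun i _ => hw _)
  calc ∑ α ∈ multiIdx ι D, (∏ i, w (α i)) * m (∑ i, α i)
      ≤ ∑ α ∈ multiIdx ι D, (c * ∏ i, w (α i) * θ ^ α i - if α = 0 then c - 1 else 0) :=
        Finset.sum_le_sum term_le
    _ = c * ∑ α ∈ multiIdx ι D, ∏ i, w (α i) * θ ^ α i - (c - 1) := by
        rw [Finset.sum_sub_distrib, Finset.sum_ite_eq', if_pos zero_mem, Finset.mul_sum]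
    _ ≤ c * ∑ α ∈ Fintype.piFinset fun _ : ι => Finset.range (D + 1), ∏ i, w (α i) * θ ^ α i
          - (c - 1) := by
        gcongr ?_ * ?_ - _
        refine Finset.sum_le_sum_of_subset_of_nonneg (Finset.filter_subset _ _) fun α _ _ => ?_
        exact Finset.prod_nonneg fun i _ => mul_nonneg (hw _) (pow_nonneg hθ _)
    _ = c * (∑ k ∈ Finset.range (D + 1), w k * θ ^ k) ^ Fintype.card ι - (c - 1) := by
        rw [← Finset.prod_univ_sum (fun _ => Finset.range (D + 1)) fun _ k => w k * θ ^ k,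
          Finset.prod_const, Finset.card_univ]

variable {N n : ℕ} {μ : Measure (Fin n → Fin n → ℝ)} [IsProbabilityMeasure μ]

lemma hasAllMoments_lowDegRatio_row (horth : ∀ᵐ Q ∂μ, (Matrix.of Q)ᵀ * Matrix.of Q = 1)
    (s : ℝ≥0) (ν : Measure ℝ) (D : ℕ) (i : Fin n) :
    HasAllMoments (fun z : (Fin n → Fin n → ℝ) × (Fin N → Fin n → ℝ) =>
      lowDegRatio s ν D (Matrix.of z.2 *ᵥ z.1 i)) (μ.prod (iidGaussVec N n s)) := by
  have product (k : Fin N) (j : Fin n) := ((hasAllMoments_entry_iidGaussVec N n s k j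
    ).comp_measurePreserving (measurePreserving_snd (μ := μ))).mul
      ((hasAllMoments_entry_of_ae_orthogonal horth i j).comp_measurePreserving
        (measurePreserving_fst (ν := iidGaussVec N n s)))
  have image (k : Fin N) : HasAllMoments (fun z : (Fin n → Fin n → ℝ) × (Fin N → Fin n → ℝ) =>
      (Matrix.of z.2 *ᵥ z.1 i) k) (μ.prod (iidGaussVec N n s)) :=
    .sum Finset.univ (product k)
  exact HasAllMoments.lowDegRatio image s ν D

lemma integrable_row_dotProduct_row_pow (horth : ∀ᵐ Q ∂μ, (Matrix.of Q)ᵀ * Matrix.of Q = 1)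
    (i : Fin n) (d : ℕ) :
    Integrable (fun q : (Fin n → Fin n → ℝ) × (Fin n → Fin n → ℝ) => (q.1 i ⬝ᵥ q.2 i) ^ d)
      (μ.prod μ) := by
  have entry (j : Fin n) := hasAllMoments_entry_of_ae_orthogonal horth i j
  have overlap : HasAllMoments (fun q : (Fin n → Fin n → ℝ) × (Fin n → Fin n → ℝ) =>
      q.1 i ⬝ᵥ q.2 i) (μ.prod μ) :=
    .sum _ fun j => ((entry j).comp_measurePreserving measurePreserving_fst).mul
      ((entry j).comp_measurePreserving measurePreserving_snd)
  simpa using (overlap.polynomial_eval (Polynomial.X ^ d)).integrable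

lemma integral_row_dotProduct_row_pow_le
    (horth : ∀ᵐ Q ∂μ, (Matrix.of Q)ᵀ * Matrix.of Q = 1)
    (hinv : ∀ R : Matrix (Fin n) (Fin n) ℝ, Rᵀ * R = 1 →
      Measure.map (fun Q => fun i j => (R * Matrix.of Q) i j) μ = μ)
    (i : Fin n) {d D : ℕ} (hd : d ≤ D) :
    ∫ q, (q.1 i ⬝ᵥ q.2 i) ^ d ∂(μ.prod μ) ≤ 4 * (D / √n) ^ d := by
  have integrable_pow := integrable_row_dotProduct_row_pow horth i d
  have sqrt_pos : 0 < √(n : ℝ) := Real.sqrt_pos.2 (by exact_mod_cast i.pos)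
  have factorial_le : (d.factorial : ℝ) ≤ (D : ℝ) ^ d := by
    exact_mod_cast d.factorial_le_pow.trans (Nat.pow_le_pow_left hd d)
  have inner_le : ∀ᵐ Q' ∂μ, ∫ Q, (Q i ⬝ᵥ Q' i) ^ d ∂μ ≤ 4 * (D / √n) ^ d :=
    horth.mono fun Q' hQ' => by
      rw [div_pow, ← mul_div_assoc, le_div_iff₀ (by positivity)]
      calc (∫ Q, (Q i ⬝ᵥ Q' i) ^ d ∂μ) * √n ^ d
          ≤ |∫ Q, (Q i ⬝ᵥ Q' i) ^ d ∂μ| * √n ^ d := by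
            gcongr
            exact le_abs_self _
        _ ≤ 4 * d.factorial := abs_integral_row_dotProduct_pow_le horth hinv i
            (row_dotProduct_self_of_orthogonal hQ' i) d
        _ ≤ 4 * D ^ d := by gcongr
  rw [integral_prod_symm _ integrable_pow]
  calc ∫ Q', ∫ Q, (Q i ⬝ᵥ Q' i) ^ d ∂μ ∂μ ≤ ∫ _Q', 4 * (D / √n) ^ d ∂μ :=
        integral_mono_ae integrable_pow.integral_prod_right (integrable_const _) inner_le
    _ = 4 * (D / √n) ^ d := by simp

lemma integral_lowDegRatio_row_mul_le (s : ℝ≥0) (ν : Measure ℝ) [IsProbabilityMeasure ν]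
    (horth : ∀ᵐ Q ∂μ, (Matrix.of Q)ᵀ * Matrix.of Q = 1)
    (hinv : ∀ R : Matrix (Fin n) (Fin n) ℝ, Rᵀ * R = 1 →
      Measure.map (fun Q => fun i j => (R * Matrix.of Q) i j) μ = μ) (D : ℕ) (i : Fin n) :
    ∫ q, ∫ Y, lowDegRatio s ν D (Matrix.of Y *ᵥ q.1 i) * lowDegRatio s ν D (Matrix.of Y *ᵥ q.2 i)
        ∂(iidGaussVec N n s) ∂(μ.prod μ)
      ≤ 4 * (∑ k ∈ Finset.range (D + 1), hermiteWeight s ν k * (D / √n) ^ k) ^ N - 3 := by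
  have expand : ∀ᵐ q ∂(μ.prod μ),
      ∫ Y, lowDegRatio s ν D (Matrix.of Y *ᵥ q.1 i) * lowDegRatio s ν D (Matrix.of Y *ᵥ q.2 i)
        ∂(iidGaussVec N n s)
      = ∑ α ∈ multiIdx (Fin N) D,
          (∏ k, hermiteWeight s ν (α k)) * (q.1 i ⬝ᵥ q.2 i) ^ ∑ k, α k := by
    filter_upwards [Measure.quasiMeasurePreserving_fst.ae horth,
      Measure.quasiMeasurePreserving_snd.ae horth] with q hq₁ hq₂
    exact integral_lowDegRatio_mulVec_mul ν s D (row_dotProduct_self_of_orthogonal hq₁ i)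
      (row_dotProduct_self_of_orthogonal hq₂ i)
  rw [integral_congr_ae expand, integral_finsetSum _ fun α _ =>
    (integrable_row_dotProduct_row_pow horth i _).const_mul _]
  simp only [integral_const_mul]
  refine (sum_multiIdx_prod_mul_le (hermiteWeight_nonneg s.coe_nonneg ν) (hermiteWeight_zero _ _)
    (by simp) zero_le_four (by positivity)
    fun d hd => integral_row_dotProduct_row_pow_le horth hinv i hd).trans_eq ?_
  rw [Fintype.card_fin]
  norm_num

end SecondMoment

section BernoulliRademacher

variable {N k : ℕ} {ρ : ℝ}

lemma integral_brMeasure (N : ℕ) (hρ₀ : 0 ≤ ρ) (hρ₁ : ρ ≤ 1) (g : ℝ → ℝ) :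
    ∫ x, g x ∂(brMeasure N ρ)
      = (1 - ρ) * g 0 + ρ / 2 * g (√(N * ρ))⁻¹ + ρ / 2 * g (-(√(N * ρ))⁻¹) := by
  have atom (c : ℝ≥0) (a : ℝ) : Integrable g (c • Measure.dirac a) :=
    (integrable_dirac (by simp)).smul_measure_nnreal
  rw [brMeasure, integral_add_measure ((atom _ _).add_measure (atom _ _)) (atom _ _),
    integral_add_measure (atom _ _) (atom _ _)]
  simp only [integral_smul_nnreal_measure, integral_dirac, NNReal.smul_def, smul_eq_mul]
  rw [Real.coe_toNNReal _ (sub_nonneg.2 hρ₁), Real.coe_toNNReal _ (by positivity)]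

lemma isProbabilityMeasure_brMeasure (N : ℕ) (hρ₀ : 0 ≤ ρ) (hρ₁ : ρ ≤ 1) :
    IsProbabilityMeasure (brMeasure N ρ) := by
  have total_mass := integral_brMeasure N hρ₀ hρ₁ fun _ => 1
  simp only [integral_const, smul_eq_mul, mul_one] at total_mass
  exact isProbabilityMeasure_iff_real.2 (total_mass.trans (by ring))

lemma hasAllMoments_brMeasure (N : ℕ) (ρ : ℝ) : HasAllMoments (fun x => x) (brMeasure N ρ) := by
  refine HasAllMoments.of_ae_bound aestronglyMeasurable_id (√(N * ρ))⁻¹ ?_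
  have nonneg : 0 ≤ (√(N * ρ))⁻¹ := by positivity
  rw [brMeasure, ae_add_measure_iff, ae_add_measure_iff]
  refine ⟨⟨?_, ?_⟩, ?_⟩ <;> refine Measure.ae_smul_measure ?_ _ <;>
    simp only [ae_dirac_eq, Filter.eventually_pure, abs_zero, abs_neg, abs_of_nonneg nonneg, nonneg,
      le_refl]

lemma mul_sq_inv_sqrt_mul (N : ℕ) (hρ : 0 < ρ) : ρ * ((√(N * ρ))⁻¹) ^ 2 = (N : ℝ)⁻¹ := by
  rw [inv_pow, Real.sq_sqrt (by positivity), mul_inv, mul_left_comm, mul_inv_cancel₀ hρ.ne',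
    mul_one]

lemma hermiteWeight_brMeasure_eq_zero (hρ₀ : 0 < ρ) (hρ₁ : ρ ≤ 1) (hk : 1 ≤ k) (hk' : k ≤ 3) :
    hermiteWeight (N : ℝ)⁻¹ (brMeasure N ρ) k = 0 := by
  have integral_eq_zero : ∫ x, (hermiteVar (N : ℝ)⁻¹ k).eval x ∂(brMeasure N ρ) = 0 := by
    rw [integral_brMeasure N hρ₀.le hρ₁]
    have variance := mul_sq_inv_sqrt_mul N hρ₀
    generalize (√(N * ρ))⁻¹ = x at variance ⊢
    interval_cases k
    · simp [hermiteVar]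
    · rw [hermiteVar_add_two]
      simp only [hermiteVar, mul_one, Polynomial.derivative_one, mul_zero, sub_zero, Nat.cast_zero,
        zero_add, Polynomial.eval_sub, Polynomial.eval_mul, Polynomial.eval_X, Polynomial.eval_C]
      linear_combination variance
    · rw [hermiteVar_add_two, hermiteVar_add_two]
      simp only [hermiteVar, mul_one, Polynomial.derivative_one, mul_zero, sub_zero,
        Polynomial.eval_sub, Polynomial.eval_mul, Polynomial.eval_X, Polynomial.eval_C]
      ring
  simp [hermiteWeight, hermiteCoeff, integral_eq_zero]

lemma abs_eval_hermiteVar_zero_le (hρ₀ : 0 < ρ) (hρ₁ : ρ ≤ 1) (hk : 2 ≤ k) :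
    |(hermiteVar (N : ℝ)⁻¹ k).eval 0| ≤ k.factorial * (ρ * ((√(N * ρ))⁻¹) ^ k) := by
  have sqrt_variance : √((N : ℝ)⁻¹) = √ρ * (√(N * ρ))⁻¹ := by
    rw [← mul_sq_inv_sqrt_mul N hρ₀, Real.sqrt_mul hρ₀.le, Real.sqrt_sq (by positivity)]
  have sqrt_pow_le : √ρ ^ k ≤ ρ := by
    calc √ρ ^ k ≤ √ρ ^ 2 :=
          pow_le_pow_of_le_one (Real.sqrt_nonneg _) (Real.sqrt_le_one.2 hρ₁) hk
      _ = ρ := Real.sq_sqrt hρ₀.le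
  calc |(hermiteVar (N : ℝ)⁻¹ k).eval 0| ≤ k.factorial * √((N : ℝ)⁻¹) ^ k :=
        abs_eval_hermiteVar_le (by positivity) (Real.sq_sqrt (by positivity)).ge (by simp) k
    _ = k.factorial * (√ρ ^ k * ((√(N * ρ))⁻¹) ^ k) := by rw [sqrt_variance, mul_pow]
    _ ≤ k.factorial * (ρ * ((√(N * ρ))⁻¹) ^ k) := by gcongr

lemma abs_integral_hermiteVar_brMeasure_le (hρ₀ : 0 < ρ) (hρ₁ : ρ ≤ 1) (hk : 2 ≤ k) :
    |∫ y, (hermiteVar (N : ℝ)⁻¹ k).eval y ∂(brMeasure N ρ)|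
      ≤ 2 * k.factorial * ρ * ((√(N * ρ))⁻¹) ^ k := by
  set x := (√(N * ρ))⁻¹
  have x_nonneg : 0 ≤ x := by positivity
  have variance_le : (N : ℝ)⁻¹ ≤ x ^ 2 := by
    rw [← mul_sq_inv_sqrt_mul N hρ₀]
    exact mul_le_of_le_one_left (sq_nonneg _) hρ₁
  have at_atom {y : ℝ} (hy : |y| ≤ x) :
      |(hermiteVar (N : ℝ)⁻¹ k).eval y| ≤ k.factorial * x ^ k :=
    abs_eval_hermiteVar_le (by positivity) variance_le hy k
  rw [integral_brMeasure N hρ₀.le hρ₁]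
  refine (abs_add_three _ _ _).trans ?_
  rw [abs_mul, abs_mul, abs_mul, abs_of_nonneg (sub_nonneg.2 hρ₁),
    abs_of_nonneg (half_pos hρ₀).le]
  calc (1 - ρ) * |(hermiteVar (N : ℝ)⁻¹ k).eval 0|
        + ρ / 2 * |(hermiteVar (N : ℝ)⁻¹ k).eval x| + ρ / 2 * |(hermiteVar (N : ℝ)⁻¹ k).eval (-x)|
      ≤ 1 * (k.factorial * (ρ * x ^ k)) + ρ / 2 * (k.factorial * x ^ k)
        + ρ / 2 * (k.factorial * x ^ k) := by
        gcongr
        · exact sub_le_self _ hρ₀.le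
        · exact abs_eval_hermiteVar_zero_le hρ₀ hρ₁ hk
        · exact at_atom (abs_of_nonneg x_nonneg).le
        · exact at_atom (by rw [abs_neg, abs_of_nonneg x_nonneg])
    _ = 2 * k.factorial * ρ * x ^ k := by ring

lemma hermiteWeight_brMeasure_le (hN : 0 < N) (hρ₀ : 0 < ρ) (hρ₁ : ρ ≤ 1) (hk : 2 ≤ k) :
    hermiteWeight (N : ℝ)⁻¹ (brMeasure N ρ) k ≤ 4 * k.factorial * ρ ^ 2 * (ρ⁻¹) ^ k := by
  set I := ∫ y, (hermiteVar (N : ℝ)⁻¹ k).eval y ∂(brMeasure N ρ) with I_def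
  have sq_atom_pow : (((√(N * ρ))⁻¹) ^ k) ^ 2 = (N : ℝ)⁻¹ ^ k * ρ⁻¹ ^ k := by
    rw [pow_right_comm, inv_pow, Real.sq_sqrt (by positivity), mul_inv, mul_pow]
  calc hermiteWeight (N : ℝ)⁻¹ (brMeasure N ρ) k = I ^ 2 / (k.factorial * (N : ℝ)⁻¹ ^ k) := by
        rw [hermiteWeight, hermiteCoeff, ← I_def]
        field_simp
    _ ≤ (2 * k.factorial * ρ * ((√(N * ρ))⁻¹) ^ k) ^ 2 / (k.factorial * (N : ℝ)⁻¹ ^ k) := by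
        refine div_le_div_of_nonneg_right ?_ (by positivity)
        exact sq_le_sq.2 ((abs_integral_hermiteVar_brMeasure_le hρ₀ hρ₁ hk).trans (le_abs_self _))
    _ = 4 * k.factorial * ρ ^ 2 * (ρ⁻¹) ^ k := by
        rw [mul_pow, sq_atom_pow]
        field_simp
        ring

end BernoulliRademacher

section Advantage

variable {N m D : ℕ} {ν : Measure ℝ} [IsProbabilityMeasure ν]

lemma integral_plantedMeasure_le (hν : HasAllMoments (fun x => x) ν) {s : ℝ≥0} (hs : s ≠ 0)
    {μQ : Measure (Fin (m + 1) → Fin (m + 1) → ℝ)} [IsProbabilityMeasure μQ]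
    (horth : ∀ᵐ Q ∂μQ, (Matrix.of Q)ᵀ * Matrix.of Q = 1)
    (hinv : ∀ R : Matrix (Fin (m + 1)) (Fin (m + 1)) ℝ, Rᵀ * R = 1 →
      Measure.map (fun Q => fun i j => (R * Matrix.of Q) i j) μQ = μQ)
    {f : MvPolynomial (Fin N × Fin (m + 1)) ℝ} (hf : f.totalDegree ≤ D) :
    ∫ Y, MvPolynomial.eval (fun q => Y q.1 q.2) f ∂(plantedMeasure N (m + 1) ν s μQ)
      ≤ √(4 * (∑ k ∈ Finset.range (D + 1), hermiteWeight s ν k * (D / √(m + 1 : ℕ)) ^ k) ^ N - 3)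
        * √(∫ Y, MvPolynomial.eval (fun q => Y q.1 q.2) f ^ 2 ∂(iidGaussVec N (m + 1) s)) := by
  have kernel_le := integral_lowDegRatio_row_mul_le (N := N) s ν horth hinv D 0
  rw [integral_plantedMeasure hν hs horth hf, ← Real.sqrt_mul' _ (by positivity), mul_comm (_ - _)]
  refine Real.le_sqrt_of_sq_le ((sq_integral_integral_mul_le
    (hasAllMoments_eval_iidGaussVec s f).memLp_two
    (hasAllMoments_lowDegRatio_row horth s ν D 0).memLp_two).trans ?_)
  gcongr

end Advantage

section Numerics

variable {N n D m : ℕ} {w : ℕ → ℝ} {b c τ ρ L : ℝ}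

lemma sum_range_ite_half_pow_sub_le (m n : ℕ) :
    ∑ k ∈ Finset.range n, (if m ≤ k then (1 / 2 : ℝ) ^ (k - m) else 0) ≤ 2 := by
  calc ∑ k ∈ Finset.range n, (if m ≤ k then (1 / 2 : ℝ) ^ (k - m) else 0)
      ≤ ∑ k ∈ Finset.range (m + n), (if m ≤ k then (1 / 2 : ℝ) ^ (k - m) else 0) := by
        refine Finset.sum_le_sum_of_subset_of_nonneg
          (Finset.range_subset_range.2 (Nat.le_add_left n m)) fun k _ _ => ?_
        split_ifs <;> positivity
    _ = ∑ k ∈ Finset.range n, (1 / 2 : ℝ) ^ k := by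
        rw [Finset.sum_range_add, Finset.sum_eq_zero fun k hk =>
          if_neg (not_le.2 (Finset.mem_range.1 hk)), zero_add]
        simp
    _ ≤ 2 := sum_geometric_two_le n

lemma sum_mul_pow_le_of_le_factorial_mul_pow (hb : 0 ≤ b) (hc : 0 ≤ c) (hτ : 0 ≤ τ)
    (hw₀ : w 0 = 1) (hw_zero : ∀ k, 1 ≤ k → k < m → w k = 0)
    (hw_le : ∀ k, m ≤ k → w k ≤ c * k.factorial * b ^ k) (hr : D * b * τ ≤ 1 / 2) :
    ∑ k ∈ Finset.range (D + 1), w k * τ ^ k ≤ 1 + 2 * c * (D * b * τ) ^ m := by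
  set r := D * b * τ with r_def
  have : 0 ≤ r := by positivity
  have tail_term {k : ℕ} (hkD : k ≤ D) (hmk : m ≤ k) :
      w k * τ ^ k ≤ c * r ^ m * (1 / 2) ^ (k - m) := by
    have factorial_le : (k.factorial : ℝ) ≤ (D : ℝ) ^ k := by
      exact_mod_cast k.factorial_le_pow.trans (Nat.pow_le_pow_left hkD k)
    calc w k * τ ^ k ≤ c * k.factorial * b ^ k * τ ^ k := by gcongr; exact hw_le k hmk
      _ ≤ c * D ^ k * b ^ k * τ ^ k := by gcongr
      _ = c * r ^ m * r ^ (k - m) := by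
          rw [mul_assoc c (r ^ m), ← pow_add, Nat.add_sub_cancel' hmk, r_def, mul_pow, mul_pow]
          ring
      _ ≤ c * r ^ m * (1 / 2) ^ (k - m) := by gcongr
  have term_le : ∀ k ∈ Finset.range (D + 1), w k * τ ^ k
      ≤ (if k = 0 then 1 else 0) + c * r ^ m * (if m ≤ k then (1 / 2) ^ (k - m) else 0) := by
    intro k hk
    rcases k.eq_zero_or_pos with rfl | k_pos
    · rw [if_pos rfl, hw₀, pow_zero, mul_one, le_add_iff_nonneg_right]
      split_ifs <;> positivity
    · rw [if_neg k_pos.ne', zero_add]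
      split_ifs with hmk
      · exact tail_term (Finset.mem_range_succ_iff.1 hk) hmk
      · rw [hw_zero k k_pos (not_le.1 hmk), zero_mul, mul_zero]
  calc ∑ k ∈ Finset.range (D + 1), w k * τ ^ k
      ≤ 1 + c * r ^ m * ∑ k ∈ Finset.range (D + 1), (if m ≤ k then (1 / 2) ^ (k - m) else 0) := by
        refine (Finset.sum_le_sum term_le).trans_eq ?_
        rw [Finset.sum_add_distrib, ← Finset.mul_sum, Finset.sum_ite_eq', if_pos (by simp)]
    _ ≤ 1 + c * r ^ m * 2 := by gcongr; exact sum_range_ite_half_pow_sub_le m (D + 1)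
    _ = 1 + 2 * c * r ^ m := by ring

lemma degree_sq_le_half_sqrt_mul (hn : 0 < n) (hnN : n ≤ N) (hDL : 8 * (D : ℝ) ^ 4 ≤ L)
    (hNL : √N * L ≤ n * ρ) : (D : ℝ) ^ 2 ≤ 1 / 2 * (√n * ρ) := by
  have sqrt_pos : 0 < √(n : ℝ) := Real.sqrt_pos.2 (by exact_mod_cast hn)
  have L_nonneg : 0 ≤ L := le_trans (by positivity) hDL
  have L_le : L ≤ √n * ρ := by
    refine le_of_mul_le_mul_left ?_ sqrt_pos
    calc √n * L ≤ √N * L := by gcongr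
      _ ≤ n * ρ := hNL
      _ = √n * (√n * ρ) := by rw [← mul_assoc, Real.mul_self_sqrt n.cast_nonneg]
  have sq_le_pow_four : (D : ℝ) ^ 2 ≤ (D : ℝ) ^ 4 := by
    exact_mod_cast (Nat.le_self_pow two_ne_zero (D ^ 2)).trans_eq (pow_mul D 2 2).symm
  linarith

lemma mul_sq_mul_ratio_pow_four_le (hn : 0 < n) (hρ : 0 < ρ) (hDL : 8 * (D : ℝ) ^ 4 ≤ L)
    (hNL : √N * L ≤ n * ρ) :
    N * (2 * (4 * ρ ^ 2) * (D * ρ⁻¹ * (D / √n)) ^ 4) ≤ 1 / 8 := by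
  have n_pos : (0 : ℝ) < n := by exact_mod_cast hn
  have L_nonneg : 0 ≤ L := le_trans (by positivity) hDL
  have sqrt_pow_four : √(n : ℝ) ^ 4 = (n : ℝ) ^ 2 := by
    rw [show 4 = 2 * 2 by norm_num, pow_mul, Real.sq_sqrt n_pos.le]
  have rewrite_lhs : N * (2 * (4 * ρ ^ 2) * (D * ρ⁻¹ * (D / √n)) ^ 4)
      = N * (8 * (D : ℝ) ^ 4) ^ 2 / 8 / (n * ρ) ^ 2 := by
    rw [mul_pow, div_pow, sqrt_pow_four]
    field_simp
    ring
  rw [rewrite_lhs, div_le_iff₀ (by positivity)]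
  calc N * (8 * (D : ℝ) ^ 4) ^ 2 / 8 ≤ N * L ^ 2 / 8 := by gcongr
    _ = 1 / 8 * (√N * L) ^ 2 := by rw [mul_pow, Real.sq_sqrt N.cast_nonneg]; ring
    _ ≤ 1 / 8 * (n * ρ) ^ 2 := by gcongr

lemma one_add_pow_le_of_mul_le {x : ℝ} (hx : 0 ≤ x) (hNx : N * x ≤ 1 / 8) :
    (1 + x) ^ N ≤ 7 / 4 := by
  calc (1 + x) ^ N ≤ Real.exp x ^ N := by
        gcongr
        rw [add_comm]
        exact Real.add_one_le_exp x
    _ = Real.exp (N * x) := (Real.exp_nat_mul x N).symm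
    _ ≤ 1 / (1 - N * x) :=
        Real.exp_bound_div_one_sub_of_interval (by positivity) (by linarith)
    _ ≤ 7 / 4 := by
        rw [div_le_iff₀ (by linarith)]
        linarith

lemma eight_mul_pow_four_le_rpow {ℓ C : ℝ} (hℓ : 8 ≤ ℓ) (hD : (D : ℝ) ≤ ℓ ^ C) :
    8 * (D : ℝ) ^ 4 ≤ ℓ ^ (4 * C + 1) := by
  have ℓ_pos : 0 < ℓ := by linarith
  calc 8 * (D : ℝ) ^ 4 ≤ ℓ * (ℓ ^ C) ^ 4 := by gcongr
    _ = ℓ ^ (4 * C + 1) := by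
        rw [Real.rpow_add_one ℓ_pos.ne', mul_comm 4 C, Real.rpow_mul ℓ_pos.le, mul_comm]
        norm_cast

end Numerics

lemma four_mul_sum_hermiteWeight_brMeasure_pow_le {N n D : ℕ} {ρ L : ℝ} (hn : 0 < n)
    (hnN : n ≤ N) (hρ₀ : 0 < ρ) (hρ₁ : ρ ≤ 1) (hDL : 8 * (D : ℝ) ^ 4 ≤ L)
    (hNL : √N * L ≤ n * ρ) :
    4 * (∑ k ∈ Finset.range (D + 1),
      hermiteWeight (N : ℝ)⁻¹ (brMeasure N ρ) k * (D / √n) ^ k) ^ N - 3 ≤ 4 := by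
  have := isProbabilityMeasure_brMeasure N hρ₀.le hρ₁
  have : 0 < √(n : ℝ) := Real.sqrt_pos.2 (by exact_mod_cast hn)
  have ratio_le_half : D * ρ⁻¹ * (D / √n) ≤ 1 / 2 := by
    calc D * ρ⁻¹ * (D / √n) = (D : ℝ) ^ 2 / (√n * ρ) := by field_simp
      _ ≤ 1 / 2 := (div_le_iff₀ (by positivity)).2 (degree_sq_le_half_sqrt_mul hn hnN hDL hNL)
  have sum_le := sum_mul_pow_le_of_le_factorial_mul_pow (m := 4) (c := 4 * ρ ^ 2) (b := ρ⁻¹)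
    (by positivity) (by positivity) (by positivity) (hermiteWeight_zero (N : ℝ)⁻¹ (brMeasure N ρ))
    (fun k hk hk' => hermiteWeight_brMeasure_eq_zero hρ₀ hρ₁ hk (Nat.le_of_lt_succ hk'))
    (fun k hk => (hermiteWeight_brMeasure_le (hn.trans_le hnN) hρ₀ hρ₁ (by omega)).trans_eq
      (by ring)) ratio_le_half
  have sum_nonneg : 0 ≤ ∑ k ∈ Finset.range (D + 1),
      hermiteWeight (N : ℝ)⁻¹ (brMeasure N ρ) k * (D / √n) ^ k :=
    Finset.sum_nonneg fun k _ =>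
      mul_nonneg (hermiteWeight_nonneg (by positivity) _ k) (by positivity)
  have pow_le := (pow_le_pow_left₀ sum_nonneg sum_le N).trans
    (one_add_pow_le_of_mul_le (by positivity) (mul_sq_mul_ratio_pow_four_le hn hρ₀ hDL hNL))
  linarith

/-- low-degree hardness of detection: for the detection problem with null
`𝒬` (i.i.d. `N(0,1/N)` entries) and planted `𝒫` (`Ỹ = YQ`, `v ∼ BR(N,ρ)`, `Q` Haar-uniform
orthogonal, characterized as a probability measure supported on orthogonal matrices and
left-translation invariant), for any constant `C₁ > 0` there exist a constant `C₂ > 0` and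
an absolute `N₀` such that: if `nρ ≥ √N (log N)^{C₂}` and `D ≤ (log N)^{C₁}`, then
`Adv_{≤D} ≤ 2`, i.e. every nonzero polynomial `f` of degree at most `D` in the entries of
`Ỹ` satisfies `𝔼_𝒫[f] / √(𝔼_𝒬[f²]) ≤ 2`. -/
theorem stmt_14 (C₁ : ℝ) (hC₁ : 0 < C₁) :
    ∃ C₂ : ℝ, 0 < C₂ ∧ ∃ N₀ : ℕ,
      ∀ N n : ℕ, ∀ ρ : ℝ, N₀ ≤ N → 1 ≤ n → n ≤ N → 0 < ρ → ρ ≤ 1 →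
        ∀ (μQ : Measure (Fin n → Fin n → ℝ)) [IsProbabilityMeasure μQ],
          (∀ᵐ Q ∂μQ, (Matrix.of Q)ᵀ * Matrix.of Q = 1) →
          (∀ R : Matrix (Fin n) (Fin n) ℝ, Rᵀ * R = 1 →
            Measure.map (fun Q => fun i j => (R * Matrix.of Q) i j) μQ = μQ) →
        ∀ D : ℕ, (D : ℝ) ≤ (Real.log N) ^ C₁ →
          Real.sqrt N * (Real.log N) ^ C₂ ≤ (n : ℝ) * ρ →
          ∀ f : MvPolynomial (Fin N × Fin n) ℝ, f.totalDegree ≤ D → f ≠ 0 →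
            (∫ Y, MvPolynomial.eval (fun q => Y q.1 q.2) f
                ∂(Measure.map
                  (fun w : (Fin N → ℝ) × (Fin n → Fin n → ℝ)
                      × (Fin N → Fin (n - 1) → ℝ) =>
                    fun i j => (gaussBasis w.1 w.2.2 * Matrix.of w.2.1) i j)
                  ((brVec N ρ).prod
                    (μQ.prod (iidGaussVec N (n - 1) ((N : NNReal))⁻¹)))))
              / Real.sqrt (∫ Y, (MvPolynomial.eval (fun q => Y q.1 q.2) f) ^ 2
                ∂(Measure.pi fun _ : Fin N =>
                    (Measure.pi fun _ : Fin n => gaussianReal 0 ((N : NNReal))⁻¹)))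
              ≤ 2 := by
  refine ⟨4 * C₁ + 1, by positivity, ⌈Real.exp 8⌉₊, ?_⟩
  intro N n ρ hN hn hnN hρ hρ1 μQ _ horth hinv D hD hNL f hf _
  obtain ⟨m, rfl⟩ := Nat.exists_eq_add_of_le' hn
  have N_pos : 0 < N := hn.trans hnN
  have eight_le_log : 8 ≤ Real.log N :=
    (Real.le_log_iff_exp_le (by exact_mod_cast N_pos)).2 (Nat.ceil_le.1 hN)
  have := isProbabilityMeasure_brMeasure N hρ.le hρ1
  have advantage_le := integral_plantedMeasure_le (s := (N : ℝ≥0)⁻¹)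
    (hasAllMoments_brMeasure N ρ) (by positivity) horth hinv hf
  have second_moment_le := four_mul_sum_hermiteWeight_brMeasure_pow_le hn hnN hρ hρ1
    (eight_mul_pow_four_le_rpow eight_le_log hD) hNL
  refine div_le_of_le_mul₀ (Real.sqrt_nonneg _) zero_le_two (advantage_le.trans ?_)
  refine mul_le_mul_of_nonneg_right ?_ (Real.sqrt_nonneg _)
  rw [Real.sqrt_le_left zero_le_two, NNReal.coe_inv, NNReal.coe_natCast]
  exact second_moment_le.trans_eq (by norm_num)
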